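/- arXiv:2001.02055 — 2 statements merged into one kernel-verified Lean document; each statement's English description precedes it below -/
import Mathlib

section
/- Let K ≥ 2 be an integer, L ∈ {1,−1}, and let Q be a prime power such that one of the following holds: (i) L = 1, K ∈ {2,3,4,5}, Q ≥ K², and Q ≡ K or 2K−1 (mod K(K−1)); (ii) L = 1 and Q = K; (iii) L = −1, K = 3, Q ≥ 7, and Q ≡ 1 or 3 (mod 6); (iv) L = −1, K = 4, and Q ≡ 5 (mod 24). Then for every integer J ≥ 1 there exists an ETF(D^{(J)}, N^{(J)}) in ℂ^{D^{(J)}}, where D^{(J)} = (1/K)·[Q−(K−1)L]·Q^{2J−1} and N^{(J)} = ([Q−(K−1)L]/(K−1))·(Q^{2J}−1)/(Q+L). -/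
open scoped BigOperators

/-- A family `(φ n)` of vectors is an equiangular tight frame `ETF(D,N)`. -/
def IsETF {ι E : Type*} [Fintype ι] [NormedAddCommGroup E] [InnerProductSpace ℂ E]
    (D N : ℕ) (φ : ι → E) : Prop :=
  (∀ n, ‖φ n‖ = 1) ∧
  (∀ n n', n ≠ n' →
    ‖(inner ℂ (φ n) (φ n') : ℂ)‖ ^ 2 = ((N : ℝ) - D) / (D * ((N : ℝ) - 1))) ∧
  (∀ y : E, ∑ n, (inner ℂ (φ n) y : ℂ) • φ n = ((N : ℂ) / (D : ℂ)) • y)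

/-! For `J = 1` the frame is a single vector if `Q = K`, and otherwise the Naimark complement of a
frame built from a group divisible design; its inner products have modulus `1 / Q`. For larger `J`,
let `k ⊆ E` be the fields with `Q ^ 2` and `Q ^ (2 * J)` elements. To the vectors `φ i` attach
distinct multiplicative characters `f i` of `k`, and take the tensor products of `φ i` with the
extensions of `f i` to `E`, restricted to the elements of trace one. Gauss sums show that the sum
of a character of `E` over these elements has squared modulus `|E| / |k|` if the character is
nontrivial on `k`, and `|E| / |k| ^ 2` if it is nontrivial but trivial on `k`. In the first case
the inner product of the `φ i` supplies the missing factor `1 / |k|`, so the products are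
equiangular, and they meet the Welch bound. -/

/-! ### Group divisible designs -/

/-- The blocks `B` form a group divisible design on the points `V`, with block sizes in `S`. The
groups of the design are the fibres of `grp`, so that an empty group is allowed. -/
structure IsGDD {V G ι : Type} (S : Set ℕ) (grp : V → G) (B : ι → Set V) : Prop where
  ncard_mem : ∀ i, (B i).ncard ∈ S
  eq_of_grp_eq : ∀ {i x y}, x ∈ B i → y ∈ B i → grp x = grp y → x = y
  existsUnique_mem : ∀ {x y}, grp x ≠ grp y → ∃! i, x ∈ B i ∧ y ∈ B i

/-- There is a group divisible design with finitely many blocks, all of size in `S`, whose groups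
are the fibres of `grp`. -/
def HasGDD {V G : Type} (S : Set ℕ) (grp : V → G) : Prop :=
  ∃ (ι : Type) (_ : Finite ι) (B : ι → Set V), IsGDD S grp B

/-- There is a pairwise balanced design on `V` with block sizes in `S`: a group divisible design
all of whose groups are points. -/
def HasPBD (S : Set ℕ) (V : Type) : Prop :=
  HasGDD S (id : V → V)

/-- There is a group divisible design of type `m ^ u` (that is, with `u` groups of size `m`) all of
whose blocks have size `k`. -/
def HasUniformGDD (k m u : ℕ) : Prop :=
  HasGDD {k} (Prod.fst : Fin u × Fin m → Fin u)

section GDD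

variable {S T : Set ℕ} {V W G H ι : Type} {grp : V → G} {B : ι → Set V}

theorem card_eq_card_mul_of_card_fiber {X Y : Type*} [Finite X] [Finite Y] {f : X → Y} {m : ℕ}
    (hm : ∀ y, Nat.card {x // f x = y} = m) : Nat.card X = Nat.card Y * m := by
  have := Fintype.ofFinite Y
  rw [Nat.card_congr (Equiv.sigmaFiberEquiv f).symm, Nat.card_sigma,
    Finset.sum_congr rfl fun y _ => hm y]
  simp [Nat.card_eq_fintype_card]

@[to_additive card_eq_card_mul_card_addMonoidHom_fiber]
theorem card_eq_card_mul_card_monoidHom_fiber {A P : Type*} [Group A] [Group P] [Finite A]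
    [Finite P] (π : A →* P) (hπ : Function.Surjective π) (p : P) :
    Nat.card A = Nat.card P * Nat.card {a // π a = p} :=
  card_eq_card_mul_of_card_fiber fun q => Nat.card_congr (π.fiberEquivOfSurjective hπ q p)

theorem card_fiber_comp_fst (f : V → G) (m : ℕ) (g : G) :
    Nat.card {w : V × Fin m // f w.1 = g} = Nat.card {v // f v = g} * m := by
  let e : {w : V × Fin m // f w.1 = g} ≃ {v // f v = g} × Fin m :=
    { toFun := fun w => (⟨w.1.1, w.2⟩, w.1.2)
      invFun := fun p => ⟨(p.1.1, p.2), p.1.2⟩ }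
  simp [Nat.card_congr e]

theorem card_fiber_fst (m : ℕ) (v : V) : Nat.card {w : V × Fin m // w.1 = v} = m := by
  simpa using card_fiber_comp_fst id m v

theorem IsGDD.index_eq (h : IsGDD S grp B) {x y : V} {i j : ι} (hxy : grp x ≠ grp y)
    (hxi : x ∈ B i) (hyi : y ∈ B i) (hxj : x ∈ B j) (hyj : y ∈ B j) : i = j :=
  (h.existsUnique_mem hxy).unique ⟨hxi, hyi⟩ ⟨hxj, hyj⟩

theorem IsGDD.comap (h : IsGDD S grp B) {e : W → V} (he : e.Injective)
    (hT : ∀ i, (e ⁻¹' B i).ncard ∈ T) : IsGDD T (grp ∘ e) fun i => e ⁻¹' B i where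
  ncard_mem := hT
  eq_of_grp_eq hx hy hxy := he (h.eq_of_grp_eq hx hy hxy)
  existsUnique_mem hxy := h.existsUnique_mem hxy

theorem HasGDD.mono (hST : S ⊆ T) (h : HasGDD S grp) : HasGDD T grp := by
  obtain ⟨ι, hι, B, hB⟩ := h
  exact ⟨ι, hι, B, fun i => hST (hB.ncard_mem i), hB.eq_of_grp_eq, hB.existsUnique_mem⟩

theorem HasGDD.of_equiv {grp' : W → H} (e : V ≃ W)
    (he : ∀ x y, grp x = grp y ↔ grp' (e x) = grp' (e y)) (h : HasGDD S grp) :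
    HasGDD S grp' := by
  obtain ⟨ι, hι, B, hB⟩ := h
  have hgrp : ∀ x y, grp (e.symm x) = grp (e.symm y) ↔ grp' x = grp' y := fun x y => by simp [he]
  have hB' := hB.comap (T := S) e.symm.injective fun i => by
    rw [Set.ncard_preimage_of_injective_subset_range e.symm.injective (by simp)]
    exact hB.ncard_mem i
  exact ⟨ι, hι, _, hB'.ncard_mem, fun hx hy hxy => hB'.eq_of_grp_eq hx hy ((hgrp _ _).2 hxy),
    fun hxy => hB'.existsUnique_mem (mt (hgrp _ _).1 hxy)⟩

theorem HasGDD.of_subsingleton (h : ∀ x y, grp x = grp y) : HasGDD S grp :=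
  ⟨Empty, inferInstance, fun i => i.elim, fun i => i.elim, fun {i} => i.elim,
    fun {x y} hxy => absurd (h x y) hxy⟩

theorem HasGDD.comp_of_forall_ncard_mem (p : W → V) (h : HasGDD S grp)
    (hS : ∀ A : Set V, A.ncard ∈ S → HasGDD T fun w : {w : W // p w ∈ A} => p w.1) :
    HasGDD T (grp ∘ p) := by
  obtain ⟨ι, hι, B, hB⟩ := h
  choose κ hκ C hC using fun i => hS (B i) (hB.ncard_mem i)
  refine ⟨Σ i, κ i, inferInstance, fun j => Subtype.val '' C j.1 j.2, ?_, ?_, ?_⟩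
  · rintro ⟨i, j⟩
    rw [Set.ncard_image_of_injective _ Subtype.val_injective]
    exact (hC i).ncard_mem j
  · rintro ⟨i, j⟩ _ _ ⟨x, hx, rfl⟩ ⟨y, hy, rfl⟩ hxy
    exact congrArg _ ((hC i).eq_of_grp_eq hx hy (hB.eq_of_grp_eq x.2 y.2 hxy))
  · intro x y hxy
    obtain ⟨i, ⟨hxi, hyi⟩, hi⟩ := hB.existsUnique_mem hxy
    have hne : p x ≠ p y := fun hp => hxy (congrArg grp hp)
    obtain ⟨j, ⟨hxj, hyj⟩, hj⟩ := (hC i).existsUnique_mem (x := ⟨x, hxi⟩) (y := ⟨y, hyi⟩) hne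
    refine ⟨⟨i, j⟩, ⟨⟨_, hxj, rfl⟩, ⟨_, hyj, rfl⟩⟩, ?_⟩
    rintro ⟨i', j'⟩ ⟨⟨x', hx', rfl⟩, ⟨y', hy', rfl⟩⟩
    obtain rfl : i' = i := hi i' ⟨x'.2, y'.2⟩
    obtain rfl := hj j' ⟨hx', hy'⟩
    rfl

theorem HasGDD.hasPBD [Finite G] (h : HasGDD S grp)
    (hS : ∀ g, Nat.card {v // grp v = g} ∈ S) : HasPBD S V := by
  obtain ⟨ι, hι, B, hB⟩ := h
  refine ⟨ι ⊕ G, inferInstance, Sum.elim B fun g => {v | grp v = g}, ?_, fun _ _ hxy => hxy, ?_⟩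
  · rintro (i | g)
    exacts [hB.ncard_mem i, hS g]
  · intro x y (hxy : x ≠ y)
    by_cases hg : grp x = grp y
    · refine ⟨Sum.inr (grp y), ⟨hg, rfl⟩, ?_⟩
      rintro (i | g) ⟨hx, hy⟩
      exacts [absurd (hB.eq_of_grp_eq hx hy hg) hxy, congrArg _ (Eq.symm hy)]
    · obtain ⟨i, hi, hi'⟩ := hB.existsUnique_mem hg
      refine ⟨Sum.inl i, hi, ?_⟩
      rintro (j | g) hj
      exacts [congrArg _ (hi' j hj), absurd (hj.1.trans hj.2.symm) hg]

theorem HasGDD.hasPBD_option [Finite V] [Finite G] (h : HasGDD S grp)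
    (hS : ∀ g, Nat.card {v // grp v = g} + 1 ∈ S) : HasPBD S (Option V) := by
  obtain ⟨ι, hι, B, hB⟩ := h
  let E (g : G) : Set (Option V) := insert none (some '' {v | grp v = g})
  have some_mem (g : G) (x : V) : some x ∈ E g ↔ grp x = g := by simp [E]
  have none_mem (g : G) : none ∈ E g := Set.mem_insert _ _
  refine ⟨ι ⊕ G, inferInstance, Sum.elim (fun i => some '' B i) E, ?_, fun _ _ hxy => hxy, ?_⟩
  · rintro (i | g)
    · simpa [Set.ncard_image_of_injective _ (Option.some_injective V)] using hB.ncard_mem i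
    · have : (E g).ncard = Nat.card {v // grp v = g} + 1 := by
        rw [Set.ncard_insert_of_notMem (by simp), Set.ncard_image_of_injective _
          (Option.some_injective V)]
        rfl
      exact this ▸ hS g
  · rintro (_ | x) (_ | y) hxy
    · exact absurd rfl hxy
    · refine ⟨Sum.inr (grp y), by simp [some_mem, none_mem], ?_⟩
      rintro (i | g) <;> simp +contextual [some_mem]
    · refine ⟨Sum.inr (grp x), by simp [some_mem, none_mem], ?_⟩
      rintro (i | g) <;> simp +contextual [some_mem]
    · by_cases hg : grp x = grp y
      · refine ⟨Sum.inr (grp y), by simp [some_mem, hg], ?_⟩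
        rintro (i | g) ⟨hx, hy⟩
        · have hx : x ∈ B i := by simpa using hx
          have hy : y ∈ B i := by simpa using hy
          exact absurd (congrArg some (hB.eq_of_grp_eq hx hy hg)) hxy
        · exact congrArg _ ((some_mem g y).1 hy).symm
      · obtain ⟨i, hi, hi'⟩ := hB.existsUnique_mem hg
        refine ⟨Sum.inl i, by simpa using hi, ?_⟩
        rintro (j | g) hj
        · exact congrArg _ (hi' j (by simpa using hj))
        · exact absurd (((some_mem g x).1 hj.1).trans ((some_mem g y).1 hj.2).symm) hg

theorem HasGDD.comp_of_grp_eq {k : ℕ} (h : HasGDD {k + 1} grp) {e : W → V} (he : e.Injective)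
    {g : G} (hg : ∀ x ∉ Set.range e, grp x = g) : HasGDD {k, k + 1} (grp ∘ e) := by
  obtain ⟨ι, hι, B, hB⟩ := h
  refine ⟨ι, hι, _, hB.comap he fun i => ?_⟩
  rw [← Set.ncard_image_of_injective _ he, Set.image_preimage_eq_inter_range]
  by_cases hsub : B i ⊆ Set.range e
  · rw [Set.inter_eq_left.2 hsub]
    exact Or.inr (hB.ncard_mem i)
  · obtain ⟨p, hpB, hp⟩ := Set.not_subset.1 hsub
    have : B i ∩ Set.range e = B i \ {p} := by
      refine Set.ext fun q => and_congr_right fun hqB => ⟨?_, fun hqp => ?_⟩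
      · rintro hq rfl
        exact hp hq
      · by_contra hq
        exact hqp (hB.eq_of_grp_eq hqB hpB ((hg q hq).trans (hg p hp).symm))
    left
    rw [this, Set.ncard_sdiff_singleton_of_mem hpB, hB.ncard_mem i, Nat.add_sub_cancel]

theorem HasPBD.exists_hasGDD_of_option {k : ℕ} (h : HasPBD {k} (Option W)) :
    ∃ (G : Type) (_ : Finite G) (grp : W → G), HasGDD {k} grp ∧
      ∀ g, Nat.card {w // grp w = g} = k - 1 := by
  obtain ⟨ι, hι, B, hB⟩ := h
  choose f hf hf' using fun w : W => hB.existsUnique_mem (x := none) (y := some w) (by simp)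
  have f_eq {w : W} {i : ι} (hi : none ∈ B i) : f w = i ↔ some w ∈ B i :=
    ⟨fun h => h ▸ (hf w).2, fun hw => (hf' w i ⟨hi, hw⟩).symm⟩
  let grp (w : W) : {i // none ∈ B i} := ⟨f w, (hf w).1⟩
  have grp_eq (w : W) (g) : grp w = g ↔ some w ∈ B g.1 := Subtype.ext_iff.trans (f_eq g.2)
  refine ⟨_, inferInstance, grp,
    ⟨{i // none ∉ B i}, inferInstance, fun i => some ⁻¹' B i, ?_, ?_, ?_⟩, fun g => ?_⟩
  · rintro ⟨i, hi⟩
    rw [Set.ncard_preimage_of_injective_subset_range (Option.some_injective W)]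
    · exact hB.ncard_mem i
    · rintro (_ | x) hx
      exacts [absurd hx hi, ⟨x, rfl⟩]
  · rintro ⟨i, hi⟩ x y hx hy hxy
    by_contra hne
    have hfi : f y = i := hB.index_eq (x := some x) (y := some y) (by simpa using hne)
      ((grp_eq x (grp y)).1 hxy) (hf y).2 hx hy
    exact hi (hfi ▸ (hf y).1)
  · intro x y hxy
    have hne : id (some x) ≠ id (some y) := fun h => hxy (congrArg grp (Option.some_injective W h))
    obtain ⟨j, ⟨hxj, hyj⟩, hj⟩ := hB.existsUnique_mem hne
    have hn : none ∉ B j := fun hn =>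
      hxy (((grp_eq x ⟨j, hn⟩).2 hxj).trans ((grp_eq y ⟨j, hn⟩).2 hyj).symm)
    exact ⟨⟨j, hn⟩, ⟨hxj, hyj⟩, fun i hi => Subtype.ext (hj i hi)⟩
  · have himage : some '' {w | grp w = g} = B g.1 \ {none} := by
      ext (_ | w) <;> simp [grp_eq]
    have hcard : {w | grp w = g}.ncard = k - 1 := by
      rw [← Set.ncard_image_of_injective _ (Option.some_injective W), himage,
        Set.ncard_sdiff_singleton_of_mem g.2, hB.ncard_mem g.1]
    exact hcard

end GDD

section UniformGDD

variable {S : Set ℕ} {V G : Type} {grp : V → G} {k κ m s u w : ℕ}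

theorem HasGDD.hasUniformGDD [Finite V] [Finite G] (h : HasGDD {k} grp) (hG : Nat.card G = u)
    (hm : ∀ g, Nat.card {v // grp v = g} = m) : HasUniformGDD k m u := by
  let eG : G ≃ Fin u := Finite.equivFinOfCardEq hG
  let eFiber (g) : {v // grp v = g} ≃ Fin m := Finite.equivFinOfCardEq (hm g)
  let e : V ≃ Fin u × Fin m :=
    (Equiv.sigmaFiberEquiv grp).symm.trans ((Equiv.sigmaCongrRight eFiber).trans
      ((Equiv.sigmaEquivProd _ _).trans (eG.prodCongr (Equiv.refl _))))
  refine h.of_equiv e fun x y => ?_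
  change _ ↔ eG (grp x) = eG (grp y)
  rw [eG.injective.eq_iff]

theorem HasGDD.hasGDD_comp_fst [Finite V] (h : HasGDD S grp)
    (hS : ∀ n ∈ S, HasUniformGDD κ m n) : HasGDD {κ} (grp ∘ Prod.fst : V × Fin m → G) := by
  refine h.comp_of_forall_ncard_mem _ fun A hA => ?_
  let eA : Fin A.ncard ≃ A := (Finite.equivFinOfCardEq (Nat.card_coe_set_eq A)).symm
  let e : Fin A.ncard × Fin m ≃ {w : V × Fin m // w.1 ∈ A} :=
    { toFun := fun p => ⟨(eA p.1, p.2), (eA p.1).2⟩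
      invFun := fun p => (eA.symm ⟨p.1.1, p.2⟩, p.1.2)
      left_inv := fun p => by simp
      right_inv := fun p => by simp }
  refine (hS _ hA).of_equiv e fun x y => ?_
  change _ ↔ (eA x.1 : V) = eA y.1
  rw [Subtype.val_injective.eq_iff, eA.injective.eq_iff]

theorem HasPBD.hasUniformGDD [Finite V] (h : HasPBD S V) (hS : ∀ n ∈ S, HasUniformGDD κ m n) :
    HasUniformGDD κ m (Nat.card V) :=
  (HasGDD.hasGDD_comp_fst h hS).hasUniformGDD rfl (card_fiber_fst m)

theorem HasPBD.of_card_mem (h : Nat.card V ∈ S) : HasPBD S V :=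
  ⟨Unit, inferInstance, fun _ => Set.univ, fun _ => by rwa [Set.ncard_univ], fun _ _ hxy => hxy,
    fun _ => ⟨(), by simp, by simp⟩⟩

theorem hasPBD_two (V : Type) [Finite V] : HasPBD {2} V := by
  refine ⟨{e : Sym2 V // ¬ e.IsDiag}, inferInstance, fun e => {x | x ∈ e.1}, ?_,
    fun _ _ hxy => hxy, ?_⟩
  · rintro ⟨e, he⟩
    induction e with
    | h x y =>
      have : {z | z ∈ s(x, y)} = {x, y} := by ext; simp
      change {z | z ∈ s(x, y)}.ncard = 2
      rw [this, Set.ncard_pair (by simpa using he)]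
  · intro x y (hxy : x ≠ y)
    exact ⟨⟨s(x, y), by simpa using hxy⟩, by simp,
      fun e he => Subtype.ext ((Sym2.mem_and_mem_iff hxy).1 he)⟩

theorem HasPBD.hasUniformGDD_one [Finite V] (h : HasPBD {k} V) :
    HasUniformGDD k 1 (Nat.card V) :=
  HasGDD.hasUniformGDD h rfl fun g => by simp

namespace HasUniformGDD

theorem zero (k m : ℕ) : HasUniformGDD k m 0 :=
  .of_subsingleton fun x => x.1.elim0

theorem one (k m : ℕ) : HasUniformGDD k m 1 :=
  .of_subsingleton fun _ _ => Subsingleton.elim _ _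

theorem self (k : ℕ) : HasUniformGDD k 1 k := by
  simpa using (HasPBD.of_card_mem (V := Fin k) (S := {k}) (by simp)).hasUniformGDD_one

theorem hasPBD_of_card [Finite V] (h : HasUniformGDD k 1 u) (hV : Nat.card V = u) : HasPBD {k} V :=
  HasGDD.of_equiv ((Equiv.prodUnique (Fin u) (Fin 1)).trans (Finite.equivFinOfCardEq hV).symm)
    (fun x y => by simp) h

theorem of_block (h : HasUniformGDD k 1 u) (hk : HasUniformGDD κ m k) : HasUniformGDD κ m u := by
  simpa using (h.hasPBD_of_card (V := Fin u) (by simp)).hasUniformGDD (by simpa using hk)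

theorem mul_groupSize (h : HasUniformGDD κ m u) (hw : HasUniformGDD κ w κ) :
    HasUniformGDD κ (m * w) u :=
  (HasGDD.hasGDD_comp_fst h (by simpa using hw)).hasUniformGDD (by simp) fun g =>
    (card_fiber_comp_fst Prod.fst w g).trans (by rw [card_fiber_fst])

theorem one_mul (h : HasUniformGDD k k u) : HasUniformGDD k 1 (u * k) := by
  have := HasGDD.hasPBD (S := {k}) h fun g => card_fiber_fst k g
  simpa using this.hasUniformGDD_one

theorem adjoinPoint (hk : 1 ≤ k) (h : HasUniformGDD k (k - 1) u) :
    HasUniformGDD k 1 ((k - 1) * u + 1) := by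
  have := HasGDD.hasPBD_option (S := {k}) h fun g => by
    rw [card_fiber_fst, Nat.sub_add_cancel hk, Set.mem_singleton_iff]
  simpa [Finite.card_option, mul_comm] using this.hasUniformGDD_one

theorem deletePoint (hk : 2 ≤ k) (h : HasUniformGDD k 1 ((k - 1) * u + 1)) :
    HasUniformGDD k (k - 1) u := by
  have hcard : Nat.card (Fin ((k - 1) * u)) = (k - 1) * u := by simp
  obtain ⟨G, _, grp, hgrp, hfiber⟩ := (h.hasPBD_of_card (V := Option (Fin ((k - 1) * u)))
    (by rw [Finite.card_option, hcard])).exists_hasGDD_of_option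
  refine hgrp.hasUniformGDD (Nat.eq_of_mul_eq_mul_right (by lia : 0 < k - 1) ?_) hfiber
  rw [← card_eq_card_mul_of_card_fiber hfiber, hcard, mul_comm]

end HasUniformGDD

end UniformGDD

/-! ### Orthogonal arrays -/

/-- There is an orthogonal array of strength two and index one, with `k` factors and `n` levels:
any two of the factors `f i` together determine the run, and take all pairs of values. -/
def HasOA (k n : ℕ) : Prop :=
  ∃ (A X : Type) (_ : Finite A) (_ : Finite X) (f : Fin k → A → X), Nat.card X = n ∧
    ∀ i j, i ≠ j → Function.Bijective fun a => (f i a, f j a)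

namespace HasOA

variable {k m n : ℕ}

theorem zero (k : ℕ) : HasOA k 0 :=
  ⟨Empty, Empty, inferInstance, inferInstance, fun _ => id, by simp,
    fun _ _ _ => ⟨fun a => a.elim, fun c => c.1.elim⟩⟩

theorem one (k : ℕ) : HasOA k 1 :=
  ⟨Unit, Unit, inferInstance, inferInstance, fun _ => id, by simp,
    fun _ _ _ => ⟨fun _ _ _ => rfl, fun _ => ⟨(), rfl⟩⟩⟩

-- The factors are the `q + 1` parallel classes of lines of the affine plane over `F`.
theorem of_field (F : Type) [Field F] [Finite F] (hk : k ≤ Nat.card F + 1) :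
    HasOA k (Nat.card F) := by
  have := Fintype.ofFinite F
  rw [Nat.card_eq_fintype_card] at hk
  obtain ⟨g⟩ : Nonempty (Fin k ↪ Option F) :=
    Function.Embedding.nonempty_of_card_le (by simpa using hk)
  let f : Option F → F × F → F := fun o p => o.elim p.1 fun e => p.1 * e + p.2
  refine ⟨F × F, F, inferInstance, inferInstance, fun i => f (g i), rfl, fun i j hij => ?_⟩
  refine Finite.injective_iff_bijective.1 ?_
  have hne : g i ≠ g j := g.injective.ne hij
  rintro ⟨a, b⟩ ⟨a', b'⟩ h
  obtain ⟨hi, hj⟩ := Prod.ext_iff.1 h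
  rcases hx : g i with _ | x <;> rcases hy : g j with _ | y <;>
    simp only [f, hx, hy, Option.elim_none, Option.elim_some] at hi hj hne
  · exact absurd rfl hne
  · simp_all
  · simp_all
  · have hxy : x - y ≠ 0 := sub_ne_zero.2 fun h => hne (congrArg some h)
    have ha : a = a' := mul_right_cancel₀ hxy (by linear_combination hi - hj)
    simp_all

theorem of_prime_pow {p e : ℕ} (hp : p.Prime) (he : e ≠ 0) (hk : k ≤ p ^ e + 1) :
    HasOA k (p ^ e) := by
  have := Fact.mk hp
  rw [← GaloisField.card p e he] at hk ⊢
  exact of_field _ hk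

theorem mul (h : HasOA k m) (h' : HasOA k n) : HasOA k (m * n) := by
  obtain ⟨A, X, hA, hX, f, hc, hf⟩ := h
  obtain ⟨A', X', hA', hX', f', hc', hf'⟩ := h'
  refine ⟨A × A', X × X', inferInstance, inferInstance, fun i p => (f i p.1, f' i p.2),
    by rw [Nat.card_prod, hc, hc'], fun i j hij => ?_⟩
  exact (Equiv.prodProdProdComm X X X' X').bijective.comp ((hf i j hij).prodMap (hf' i j hij))

/-- MacNeish's theorem. -/
theorem of_factorization (h : ∀ p, p.Prime → p ∣ n → k ≤ p ^ n.factorization p + 1) :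
    HasOA k n := by
  induction n using Nat.recOnPosPrimePosCoprime with
  | zero => exact zero k
  | one => exact one k
  | prime_pow p e hp he =>
    refine of_prime_pow hp he.ne' ?_
    simpa [Nat.Prime.factorization_pow hp] using h p hp (dvd_pow_self p he.ne')
  | coprime a b ha hb hab iha ihb =>
    refine mul (iha fun p hp hpa => ?_) (ihb fun p hp hpb => ?_)
    · rw [← Nat.factorization_eq_of_coprime_left hab
        ((Nat.mem_primeFactorsList (by lia)).2 ⟨hp, hpa⟩)]
      exact h p hp (hpa.mul_right b)
    · rw [← Nat.factorization_eq_of_coprime_right hab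
        ((Nat.mem_primeFactorsList (by lia)).2 ⟨hp, hpb⟩)]
      exact h p hp (hpb.mul_left a)

theorem of_two_pow_of_three_pow (a b : ℕ) (hk : k ≤ 6) (ha : k ≤ 2 ^ a + 1) (hb : k ≤ 3 ^ b + 1)
    (h2 : ¬ 2 ∣ n ∨ 2 ^ a ∣ n) (h3 : ¬ 3 ∣ n ∨ 3 ^ b ∣ n) : HasOA k n := by
  rcases eq_or_ne n 0 with rfl | hn
  · exact zero k
  refine of_factorization fun p hp hpn => ?_
  have of_pow_dvd (c : ℕ) (hc : p ^ c ∣ n) (hk : k ≤ p ^ c + 1) :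
      k ≤ p ^ n.factorization p + 1 :=
    hk.trans <| Nat.add_le_add_right
      (Nat.pow_le_pow_right hp.pos ((hp.pow_dvd_iff_le_factorization hn).1 hc)) 1
  rcases eq_or_ne p 2 with rfl | hp2
  · exact of_pow_dvd a (h2.resolve_left (not_not.2 hpn)) ha
  rcases eq_or_ne p 3 with rfl | hp3
  · exact of_pow_dvd b (h3.resolve_left (not_not.2 hpn)) hb
  · have := hp.five_le_of_ne_two_of_ne_three hp2 hp3
    exact of_pow_dvd 1 (by simpa using hpn) (by lia)

theorem four (h2 : ¬ 2 ∣ n ∨ 4 ∣ n) : HasOA 4 n :=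
  of_two_pow_of_three_pow 2 1 (by simp) (by simp) (by simp) h2 (em' _)

theorem five (h2 : ¬ 2 ∣ n ∨ 4 ∣ n) (h3 : ¬ 3 ∣ n ∨ 9 ∣ n) : HasOA 5 n :=
  of_two_pow_of_three_pow 2 2 (by simp) (by simp) (by simp) h2 h3

theorem six (h2 : ¬ 2 ∣ n ∨ 8 ∣ n) (h3 : ¬ 3 ∣ n ∨ 9 ∣ n) : HasOA 6 n :=
  of_two_pow_of_three_pow 3 2 (by simp) (by simp) (by simp) h2 h3

theorem three (n : ℕ) : HasOA 3 n := by
  rcases eq_or_ne n 0 with rfl | hn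
  · exact zero 3
  have := NeZero.mk hn
  refine ⟨ZMod n × ZMod n, ZMod n, inferInstance, inferInstance,
    ![Prod.fst, Prod.snd, fun p => p.1 + p.2], Nat.card_zmod n,
    fun i j hij => Finite.injective_iff_bijective.1 ?_⟩
  rintro ⟨a, b⟩ ⟨a', b'⟩ h
  fin_cases i <;> fin_cases j <;> aesop

theorem hasUniformGDD (h : HasOA k n) : HasUniformGDD k n k := by
  obtain ⟨A, X, hA, hX, f, hc, hf⟩ := h
  let e : X ≃ Fin n := Finite.equivFinOfCardEq hc
  have mem_range (a : A) (p : Fin k × Fin n) :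
      p ∈ Set.range (fun i => (i, e (f i a))) ↔ f p.1 a = e.symm p.2 := by
    rw [e.eq_symm_apply]
    exact ⟨by rintro ⟨i, rfl⟩; rfl, fun hp => ⟨p.1, Prod.ext rfl hp⟩⟩
  refine ⟨A, hA, fun a => Set.range fun i => (i, e (f i a)), fun a => ?_, ?_, ?_⟩
  · rw [← Set.image_univ, Set.ncard_image_of_injective _ fun i j hij => congrArg Prod.fst hij]
    simp
  · rintro a _ _ ⟨i, rfl⟩ ⟨j, rfl⟩ (rfl : i = j)
    rfl
  · intro x y hxy
    simp only [mem_range]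
    simpa [Prod.ext_iff] using (hf _ _ hxy).existsUnique (e.symm x.2, e.symm y.2)

end HasOA

namespace HasUniformGDD

variable {κ k m s h : ℕ}

/-- The group map of the transversal design with `k + 1` groups of size `s`, after truncation of
the last group to `h` points. -/
def truncatedGroup (k s h : ℕ) : (Fin k × Fin s) ⊕ Fin h → Fin (k + 1) :=
  Sum.elim (fun p => p.1.castSucc) fun _ => Fin.last k

theorem hasGDD_truncatedGroup (hs : HasUniformGDD (k + 1) s (k + 1)) (hh : h ≤ s) :
    HasGDD {k, k + 1} (truncatedGroup k s h) := by
  let e : (Fin k × Fin s) ⊕ Fin h → Fin (k + 1) × Fin s :=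
    Sum.elim (fun p => (p.1.castSucc, p.2)) fun x => (Fin.last k, Fin.castLE hh x)
  have he : e.Injective := by
    rintro (⟨i, x⟩ | x) (⟨j, y⟩ | y) hxy <;>
      simp_all [e, Fin.castSucc_ne_last, (Fin.castSucc_ne_last _).symm]
  have hgrp : Prod.fst ∘ e = truncatedGroup k s h := by
    funext v
    rcases v with _ | _ <;> rfl
  rw [← hgrp]
  refine HasGDD.comp_of_grp_eq hs he (g := Fin.last k) fun p hp => ?_
  by_contra hne
  exact hp ⟨Sum.inl (p.1.castPred hne, p.2), by simp [e]⟩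

theorem card_fiber_truncatedGroup (k s h : ℕ) (g : Fin (k + 1)) :
    Nat.card {v // truncatedGroup k s h v = g} = if g = Fin.last k then h else s := by
  rw [Nat.card_congr Equiv.subtypeSum, Nat.card_sum]
  cases g using Fin.lastCases with
  | last => simp [truncatedGroup, Fin.castSucc_ne_last]
  | cast i =>
    simpa [truncatedGroup, Fin.castSucc_ne_last, (Fin.castSucc_ne_last _).symm] using
      card_fiber_fst s i

theorem trunc (hs : HasOA (k + 1) s) (hh : h ≤ s) (hk : HasUniformGDD κ m k)
    (hk1 : HasUniformGDD κ m (k + 1)) (hms : HasUniformGDD κ m s) (hmh : HasUniformGDD κ m h) :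
    HasUniformGDD κ m (k * s + h) := by
  have := (hasGDD_truncatedGroup hs.hasUniformGDD hh).mono (T := {n | HasUniformGDD κ m n})
    (by rintro n (rfl | rfl) <;> assumption)
  have := (HasGDD.hasPBD this fun g => by
    rw [card_fiber_truncatedGroup]; split_ifs <;> assumption).hasUniformGDD fun _ => id
  simpa using this

theorem mul (hs : HasOA k s) (hk : HasUniformGDD κ m k) (hms : HasUniformGDD κ m s) :
    HasUniformGDD κ m (k * s) := by
  have := HasGDD.mono (T := {n | HasUniformGDD κ m n}) (by simpa using hk) hs.hasUniformGDD
  have := (HasGDD.hasPBD this fun g => by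
    rwa [card_fiber_fst]).hasUniformGDD fun _ => id
  simpa using this

theorem mul_add_one (hs : HasOA k s) (hk : HasUniformGDD κ m k)
    (hms : HasUniformGDD κ m (s + 1)) : HasUniformGDD κ m (k * s + 1) := by
  have := HasGDD.mono (T := {n | HasUniformGDD κ m n}) (by simpa using hk) hs.hasUniformGDD
  have := (HasGDD.hasPBD_option this fun g => by
    rwa [card_fiber_fst]).hasUniformGDD fun _ => id
  simpa [Finite.card_option] using this

end HasUniformGDD

/-! ### Difference families -/

/-- The natural number with binary digit `1` exactly at the positions in `l`; it encodes the finite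
set of the entries of `l`. -/
def bitmask (l : List ℕ) : ℕ :=
  l.foldr (fun i n => 1 <<< i ||| n) 0

theorem testBit_bitmask {l : List ℕ} {i : ℕ} : (bitmask l).testBit i ↔ i ∈ l := by
  induction l with
  | nil => simp [bitmask]
  | cons j l ih =>
    rw [bitmask, List.foldr_cons, ← bitmask, Nat.testBit_or, Bool.or_eq_true, ih, List.mem_cons,
      Nat.one_shiftLeft, Nat.testBit_two_pow, decide_eq_true_iff, eq_comm]

/-- The list of differences `x - y` of two entries, at distinct positions, of a common block of
`bs`. -/
def differences {A : Type} [Sub A] (bs : List (List A)) : List A :=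
  bs.flatMap fun b => b.offDiag.map fun p => p.1 - p.2

/-- The base blocks `bs`, of size `k`, form a difference family relative to the kernel of `π`:
each element outside the kernel is a difference exactly once, and no element of it is. -/
structure IsDifferenceFamily {A P : Type} [AddGroup A] [AddGroup P] (k : ℕ) (π : A →+ P)
    (bs : List (List A)) : Prop where
  length_eq : ∀ b ∈ bs, b.length = k
  nodup_differences : (differences bs).Nodup
  mem_differences : ∀ d, d ∈ differences bs ↔ π d ≠ 0

namespace IsDifferenceFamily

instance {A P : Type} [AddGroup A] [AddGroup P] [DecidableEq A] [DecidableEq P] [Fintype A] (k : ℕ)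
    (π : A →+ P) (bs : List (List A)) : Decidable (IsDifferenceFamily k π bs) :=
  decidable_of_iff ((∀ b ∈ bs, b.length = k) ∧ (differences bs).Nodup ∧
    ∀ d, d ∈ differences bs ↔ π d ≠ 0)
    ⟨fun ⟨h₁, h₂, h₃⟩ => ⟨h₁, h₂, h₃⟩, fun ⟨h₁, h₂, h₃⟩ => ⟨h₁, h₂, h₃⟩⟩

section AddGroup

variable {A P : Type} [AddGroup A] [AddGroup P] {k : ℕ} {π : A →+ P} {bs : List (List A)}

theorem nodup (h : IsDifferenceFamily k π bs) {b : List A} (hb : b ∈ bs) : b.Nodup :=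
  List.nodup_offDiag.1 (.of_map _ ((List.nodup_flatMap.1 h.nodup_differences).1 b hb))

theorem sub_mem_differences (h : IsDifferenceFamily k π bs) {b : List A} (hb : b ∈ bs) {x y : A}
    (hx : x ∈ b) (hy : y ∈ b) (hxy : x ≠ y) : x - y ∈ differences bs := by
  have hmem : (x, y) ∈ b.offDiag := (h.nodup hb).mem_offDiag.2 ⟨hx, hy, hxy⟩
  exact List.mem_flatMap.2 ⟨b, hb, List.mem_map_of_mem hmem⟩

theorem eq_of_sub_eq (h : IsDifferenceFamily k π bs) {b c : List A} (hb : b ∈ bs) (hc : c ∈ bs)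
    {x y z w : A} (hx : x ∈ b) (hy : y ∈ b) (hz : z ∈ c) (hw : w ∈ c) (hxy : x ≠ y)
    (hsub : x - y = z - w) : b = c ∧ x = z := by
  obtain ⟨hnodup, hdisj⟩ := List.nodup_flatMap.1 h.nodup_differences
  have hzw : z ≠ w := fun hzw => hxy (sub_eq_zero.1 (hsub.trans (sub_eq_zero.2 hzw)))
  have hxy' : (x, y) ∈ b.offDiag := (h.nodup hb).mem_offDiag.2 ⟨hx, hy, hxy⟩
  have hzw' : (z, w) ∈ c.offDiag := (h.nodup hc).mem_offDiag.2 ⟨hz, hw, hzw⟩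
  obtain rfl : b = c := by
    by_contra hbc
    have : Std.Symm (Function.onFun List.Disjoint
      fun b : List A => b.offDiag.map fun p => p.1 - p.2) := ⟨fun _ _ => List.Disjoint.symm⟩
    exact hdisj.forall hb hc hbc (List.mem_map_of_mem hxy') (hsub ▸ List.mem_map_of_mem hzw')
  exact ⟨rfl, congrArg Prod.fst (List.inj_on_of_nodup_map (hnodup b hb) hxy' hzw' hsub)⟩

end AddGroup

variable {A P : Type} [AddCommGroup A] [Finite A] [AddCommGroup P] {k m u : ℕ} {π : A →+ P}
  {bs : List (List A)}

-- The blocks are the translates of the base blocks.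
theorem hasGDD (h : IsDifferenceFamily k π bs) : HasGDD {k} π := by
  have : Finite {b // b ∈ bs} := bs.finite_toSet
  refine ⟨{b // b ∈ bs} × A, inferInstance, fun j => {x | x - j.2 ∈ j.1.1}, ?_, ?_, ?_⟩
  · rintro ⟨⟨b, hb⟩, t⟩
    classical
    change ((· - t) ⁻¹' {x | x ∈ b}).ncard = k
    rw [Set.ncard_preimage_of_injective_subset_range sub_left_injective
      fun x _ => ⟨x + t, by simp⟩, ← List.coe_toFinset, Set.ncard_coe_finset,
      List.toFinset_card_of_nodup (h.nodup hb), h.length_eq b hb]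
  · rintro ⟨⟨b, hb⟩, t⟩ x y hx hy hxy
    by_contra hne
    have := h.sub_mem_differences hb hx hy (by simpa using hne)
    exact (h.mem_differences _).1 this (by simp [hxy])
  · intro x y hxy
    have hd : x - y ∈ differences bs := (h.mem_differences _).2 (by simpa [sub_eq_zero] using hxy)
    obtain ⟨b, hb, hd⟩ := List.mem_flatMap.1 hd
    obtain ⟨⟨p, q⟩, hpq, hsub⟩ := List.mem_map.1 hd
    obtain ⟨hp, hq, hne⟩ := (h.nodup hb).mem_offDiag.1 hpq
    have hqy : y - (x - p) = q := by rw [← sub_sub_cancel p q, hsub]; abel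
    refine ⟨(⟨b, hb⟩, x - p), ⟨by simpa using hp, by simpa [hqy] using hq⟩, ?_⟩
    rintro ⟨⟨c, hc⟩, t⟩ ⟨hx, hy⟩
    obtain ⟨rfl, rfl⟩ := h.eq_of_sub_eq hb hc hp hq hx hy hne (by simpa using hsub)
    simp

theorem hasUniformGDD [Finite P] (h : IsDifferenceFamily k π bs) (hπ : Function.Surjective π)
    (hP : Nat.card P = u) (hA : Nat.card A = u * m) : HasUniformGDD k m u := by
  refine h.hasGDD.hasUniformGDD hP fun g => ?_
  have hcard := card_eq_card_mul_card_addMonoidHom_fiber π hπ g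
  rw [hA, hP] at hcard
  exact (Nat.eq_of_mul_eq_mul_left (hP ▸ Nat.card_pos) hcard).symm

theorem of_card_differences (hlen : ∀ b ∈ bs, b.length = k)
    (hcard : (differences bs).length = Nat.card {d // π d ≠ 0})
    (hmem : ∀ d, d ∈ differences bs ↔ π d ≠ 0) : IsDifferenceFamily k π bs where
  length_eq := hlen
  nodup_differences := by
    classical
    have := Fintype.ofFinite A
    have hset : (differences bs).toFinset = Finset.univ.filter fun d => π d ≠ 0 := by
      ext d
      simp [hmem]
    refine Multiset.coe_nodup.1 (Multiset.toFinset_card_eq_card_iff_nodup.1 ?_)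
    rw [Multiset.coe_card, hcard, Nat.card_eq_fintype_card, Fintype.card_subtype, ← hset]
    rfl
  mem_differences := hmem

-- Reading off membership from a bitmask is what keeps the check fast in the kernel, which
-- evaluates bitwise operations on large numbers natively.
theorem hasUniformGDD_zmod [NeZero u] [NeZero m] {bs : List (List (ZMod (u * m)))}
    (h : (∀ b ∈ bs, b.length = k) ∧ (differences bs).length = u * m - m ∧
      ∀ d : ZMod (u * m), (bitmask ((differences bs).map ZMod.val)).testBit d.val ↔ ¬ u ∣ d.val) :
    HasUniformGDD k m u := by
  obtain ⟨hlen, hcard, hmask⟩ := h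
  let π : ZMod (u * m) →+ ZMod u := (ZMod.castHom (dvd_mul_right u m) (ZMod u)).toAddMonoidHom
  have hπ : Function.Surjective π := ZMod.castHom_surjective (dvd_mul_right u m)
  have hker (d : ZMod (u * m)) : π d = 0 ↔ u ∣ d.val := by
    rw [← ZMod.natCast_eq_zero_iff, ZMod.natCast_val]
    rfl
  have hfiber : Nat.card {d // π d = 0} = m := by
    have := card_eq_card_mul_card_addMonoidHom_fiber π hπ 0
    rw [Nat.card_zmod, Nat.card_zmod] at this
    exact (Nat.eq_of_mul_eq_mul_left (NeZero.pos u) this).symm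
  have hdiff : IsDifferenceFamily k π bs := by
    refine .of_card_differences hlen ?_ fun d => ?_
    · rw [hcard, Nat.card_eq_fintype_card, Fintype.card_subtype_compl,
        ← Nat.card_eq_fintype_card, ← Nat.card_eq_fintype_card, hfiber, Nat.card_zmod]
    · rw [Ne, hker, ← hmask, testBit_bitmask, List.mem_map_of_injective (ZMod.val_injective _)]
  exact hdiff.hasUniformGDD hπ (by simp) (by simp)

end IsDifferenceFamily

theorem HasPBD.of_list {S : Set ℕ} {V : Type} [DecidableEq V] (bs : List (List V))
    (hS : ∀ b ∈ bs, b.toFinset.card ∈ S)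
    (hpair : ∀ x y, x ≠ y → (bs.filter fun b => x ∈ b ∧ y ∈ b).length = 1) : HasPBD S V := by
  have : Finite {b // b ∈ bs} := bs.finite_toSet
  refine ⟨{b // b ∈ bs}, inferInstance, fun b => {x | x ∈ b.1}, fun b => ?_, fun _ _ hxy => hxy,
    fun {x y} hxy => ?_⟩
  · rw [← List.coe_toFinset, Set.ncard_coe_finset]
    exact hS b.1 b.2
  · obtain ⟨b, hb⟩ := List.length_eq_one_iff.1 (hpair x y hxy)
    have mem_iff (c : List V) : c ∈ bs ∧ x ∈ c ∧ y ∈ c ↔ c = b := by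
      rw [← List.mem_singleton, ← hb]
      simp
    obtain ⟨hbs, hxyb⟩ := (mem_iff b).2 rfl
    exact ⟨⟨b, hbs⟩, hxyb, fun c hc => Subtype.ext ((mem_iff c).1 ⟨c.2, hc⟩)⟩

section SmallDesigns

set_option maxRecDepth 100000

theorem hasUniformGDD_4_1_25 : HasUniformGDD 4 1 25 :=
  IsDifferenceFamily.hasUniformGDD (π := AddMonoidHom.id (ZMod 5 × ZMod 5))
    (bs := [[(0, 0), (0, 1), (4, 2), (1, 1)], [(0, 0), (0, 2), (3, 4), (2, 2)]])
    (by decide +kernel) Function.surjective_id (by simp) (by simp)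

theorem hasUniformGDD_4_3_9 : HasUniformGDD 4 3 9 :=
  IsDifferenceFamily.hasUniformGDD (π := AddMonoidHom.fst (ZMod 3 × ZMod 3) (ZMod 3))
    (bs := [[((0, 0), 0), ((0, 1), 0), ((2, 1), 1), ((1, 0), 1)],
      [((0, 0), 0), ((0, 1), 1), ((1, 2), 0), ((1, 1), 1)]])
    (by decide +kernel) Prod.fst_surjective (by simp) (by simp)

theorem hasUniformGDD_5_5_9 : HasUniformGDD 5 5 9 :=
  IsDifferenceFamily.hasUniformGDD (π := AddMonoidHom.fst (ZMod 3 × ZMod 3) (ZMod 5))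
    (bs := [[((0, 0), 0), ((0, 1), 0), ((1, 1), 2), ((2, 0), 2), ((0, 2), 1)],
      [((0, 0), 0), ((0, 1), 2), ((1, 1), 1), ((2, 1), 2), ((2, 2), 0)]])
    (by decide +kernel) Prod.fst_surjective (by simp) (by simp)

theorem hasUniformGDD_3_1_13 : HasUniformGDD 3 1 13 :=
  IsDifferenceFamily.hasUniformGDD_zmod
    (bs := [[0, 1, 4], [0, 2, 7]])
    (by decide +kernel)

theorem hasUniformGDD_4_1_37 : HasUniformGDD 4 1 37 :=
  IsDifferenceFamily.hasUniformGDD_zmod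
    (bs := [[0, 1, 21, 14], [0, 2, 28, 34], [0, 4, 12, 22]])
    (by decide +kernel)

theorem hasUniformGDD_4_2_7 : HasUniformGDD 4 2 7 :=
  IsDifferenceFamily.hasUniformGDD_zmod
    (bs := [[0, 1, 9, 11]])
    (by decide +kernel)

theorem hasUniformGDD_4_2_13 : HasUniformGDD 4 2 13 :=
  IsDifferenceFamily.hasUniformGDD_zmod
    (bs := [[0, 1, 9, 3], [0, 4, 16, 11]])
    (by decide +kernel)

theorem hasUniformGDD_4_2_19 : HasUniformGDD 4 2 19 :=
  IsDifferenceFamily.hasUniformGDD_zmod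
    (bs := [[0, 1, 29, 3], [0, 4, 20, 15], [0, 6, 31, 14]])
    (by decide +kernel)

theorem hasUniformGDD_4_2_31 : HasUniformGDD 4 2 31 :=
  IsDifferenceFamily.hasUniformGDD_zmod
    (bs := [[0, 1, 49, 37], [0, 2, 55, 35], [0, 3, 46, 57], [0, 4, 44, 34], [0, 6, 21, 45]])
    (by decide +kernel)

theorem hasUniformGDD_4_8_10 : HasUniformGDD 4 8 10 :=
  IsDifferenceFamily.hasUniformGDD_zmod
    (bs := [[0, 1, 5, 23], [0, 2, 43, 68], [0, 3, 29, 74], [0, 7, 49, 34], [0, 8, 32, 21],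
      [0, 16, 33, 52]])
    (by decide +kernel)

theorem hasUniformGDD_5_1_41 : HasUniformGDD 5 1 41 :=
  IsDifferenceFamily.hasUniformGDD_zmod
    (bs := [[0, 1, 11, 4, 29], [0, 2, 26, 21, 35]])
    (by decide +kernel)

theorem hasUniformGDD_5_1_61 : HasUniformGDD 5 1 61 :=
  IsDifferenceFamily.hasUniformGDD_zmod
    (bs := [[0, 1, 22, 55, 10], [0, 2, 44, 31, 36], [0, 3, 50, 26, 46]])
    (by decide +kernel)

theorem hasUniformGDD_5_5_13 : HasUniformGDD 5 5 13 :=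
  IsDifferenceFamily.hasUniformGDD_zmod
    (bs := [[0, 1, 22, 15, 32], [0, 2, 25, 6, 62], [0, 8, 24, 53, 35]])
    (by decide +kernel)

theorem hasUniformGDD_5_1_81 : HasUniformGDD 5 1 81 :=
  IsDifferenceFamily.hasUniformGDD_zmod
    (bs := [[0, 1, 21, 4, 48], [0, 2, 67, 76, 52], [0, 6, 28, 38, 46], [0, 11, 23, 36, 62]])
    (by decide +kernel)

theorem hasUniformGDD_5_1_141 : HasUniformGDD 5 1 141 :=
  IsDifferenceFamily.hasUniformGDD_zmod
    (bs := [[0, 24, 66, 71, 74], [0, 27, 68, 122, 128], [0, 10, 14, 44, 140],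
      [0, 12, 35, 115, 124], [0, 21, 28, 64, 86], [0, 33, 72, 90, 92], [0, 31, 56, 93, 109]])
    (by decide +kernel)

theorem hasUniformGDD_5_5_29 : HasUniformGDD 5 5 29 :=
  IsDifferenceFamily.hasUniformGDD_zmod
    (bs := [[0, 1, 72, 85, 42], [0, 16, 137, 55, 92], [0, 111, 17, 10, 22], [0, 36, 127, 15, 62],
      [0, 141, 2, 95, 122], [0, 81, 32, 70, 67], [0, 136, 77, 105, 57]])
    (by decide +kernel)

theorem hasUniformGDD_5_1_161 : HasUniformGDD 5 1 161 :=
  IsDifferenceFamily.hasUniformGDD_zmod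
    (bs := [[0, 42, 49, 77, 147], [0, 140, 38, 61, 153], [0, 152, 113, 101, 135],
      [0, 83, 67, 124, 43], [0, 129, 44, 55, 158], [0, 107, 18, 19, 71], [0, 15, 156, 111, 25],
      [0, 130, 64, 157, 2]])
    (by decide +kernel)

theorem hasUniformGDD_5_1_281 : HasUniformGDD 5 1 281 :=
  IsDifferenceFamily.hasUniformGDD_zmod
    (bs := [[0, 1, 72, 136, 267], [0, 59, 33, 156, 17], [0, 109, 261, 212, 160],
      [0, 249, 225, 144, 167], [0, 79, 68, 66, 18], [0, 165, 78, 241, 219],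
      [0, 181, 106, 169, 276], [0, 3, 28, 120, 7], [0, 177, 247, 55, 132],
      [0, 46, 242, 154, 201], [0, 185, 228, 94, 57], [0, 237, 245, 207, 272],
      [0, 214, 124, 130, 31], [0, 262, 10, 83, 143]])
    (by decide +kernel)

theorem hasUniformGDD_5_5_57 : HasUniformGDD 5 5 57 :=
  IsDifferenceFamily.hasUniformGDD_zmod
    (bs := [[0, 135, 133, 125, 163], [0, 29, 166, 242, 42], [0, 153, 87, 158, 162],
      [0, 264, 232, 252, 47], [0, 284, 169, 108, 215], [0, 97, 131, 241, 227],
      [0, 248, 67, 212, 263], [0, 156, 191, 65, 92], [0, 11, 56, 195, 236], [0, 16, 39, 79, 98],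
      [0, 6, 54, 157, 174], [0, 7, 25, 113, 208], [0, 24, 74, 136, 167], [0, 3, 55, 81, 202]])
    (by decide +kernel)

theorem hasUniformGDD_5_1_301 : HasUniformGDD 5 1 301 :=
  IsDifferenceFamily.hasUniformGDD_zmod
    (bs := [[0, 1, 72, 212, 56], [0, 79, 270, 193, 210], [0, 221, 260, 197, 35],
      [0, 2, 159, 66, 265], [0, 158, 220, 97, 166], [0, 141, 223, 138, 171],
      [0, 4, 176, 188, 181], [0, 15, 58, 103, 152], [0, 282, 67, 10, 269], [0, 6, 132, 98, 248],
      [0, 173, 194, 217, 27], [0, 122, 276, 287, 26], [0, 9, 264, 189, 236],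
      [0, 109, 87, 182, 283], [0, 183, 251, 231, 83]])
    (by decide +kernel)

theorem hasPBD_4_7_22 : HasPBD {4, 7} (Fin 22) :=
  .of_list
    [[15, 16, 17, 18, 19, 20, 21], [0, 7, 14, 15], [1, 8, 14, 16], [2, 9, 14, 17],
     [3, 10, 14, 18], [4, 11, 14, 19], [5, 12, 14, 20], [6, 13, 14, 21], [1, 5, 13, 15],
     [2, 6, 7, 16], [0, 3, 8, 17], [1, 4, 9, 18], [2, 5, 10, 19], [3, 6, 11, 20], [0, 4, 12, 21],
     [2, 3, 12, 15], [3, 4, 13, 16], [4, 5, 7, 17], [5, 6, 8, 18], [0, 6, 9, 19], [0, 1, 10, 20],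
     [1, 2, 11, 21], [8, 9, 11, 15], [9, 10, 12, 16], [10, 11, 13, 17], [7, 11, 12, 18],
     [8, 12, 13, 19], [7, 9, 13, 20], [7, 8, 10, 21], [4, 6, 10, 15], [0, 5, 11, 16],
     [1, 6, 12, 17], [0, 2, 13, 18], [1, 3, 7, 19], [2, 4, 8, 20], [3, 5, 9, 21]]
    (by decide +kernel) (by decide +kernel)

theorem hasPBD_4_7_34 : HasPBD {4, 7} (Fin 34) :=
  .of_list
    [[27, 28, 29, 30, 31, 32, 33], [0, 1, 3, 9], [1, 2, 4, 10], [0, 2, 5, 11], [3, 4, 6, 12],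
     [4, 5, 7, 13], [3, 5, 8, 14], [0, 6, 7, 15], [1, 7, 8, 16], [2, 6, 8, 17], [9, 10, 12, 18],
     [10, 11, 13, 19], [9, 11, 14, 20], [12, 13, 15, 21], [13, 14, 16, 22], [12, 14, 17, 23],
     [9, 15, 16, 24], [10, 16, 17, 25], [11, 15, 17, 26], [0, 18, 19, 21], [1, 19, 20, 22],
     [2, 18, 20, 23], [3, 21, 22, 24], [4, 22, 23, 25], [5, 21, 23, 26], [6, 18, 24, 25],
     [7, 19, 25, 26], [8, 20, 24, 26], [0, 4, 8, 27], [1, 5, 6, 27], [2, 3, 7, 27],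
     [9, 13, 17, 27], [10, 14, 15, 27], [11, 12, 16, 27], [18, 22, 26, 27], [19, 23, 24, 27],
     [20, 21, 25, 27], [0, 10, 20, 28], [1, 11, 18, 28], [2, 9, 19, 28], [3, 13, 23, 28],
     [4, 14, 21, 28], [5, 12, 22, 28], [6, 16, 26, 28], [7, 17, 24, 28], [8, 15, 25, 28],
     [0, 12, 24, 29], [1, 13, 25, 29], [2, 14, 26, 29], [3, 15, 18, 29], [4, 16, 19, 29],
     [5, 17, 20, 29], [6, 9, 21, 29], [7, 10, 22, 29], [8, 11, 23, 29], [0, 13, 26, 30],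
     [1, 14, 24, 30], [2, 12, 25, 30], [3, 16, 20, 30], [4, 17, 18, 30], [5, 15, 19, 30],
     [6, 10, 23, 30], [7, 11, 21, 30], [8, 9, 22, 30], [0, 14, 25, 31], [1, 12, 26, 31],
     [2, 13, 24, 31], [3, 17, 19, 31], [4, 15, 20, 31], [5, 16, 18, 31], [6, 11, 22, 31],
     [7, 9, 23, 31], [8, 10, 21, 31], [0, 16, 23, 32], [1, 17, 21, 32], [2, 15, 22, 32],
     [3, 10, 26, 32], [4, 11, 24, 32], [5, 9, 25, 32], [6, 13, 20, 32], [7, 14, 18, 32],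
     [8, 12, 19, 32], [0, 17, 22, 33], [1, 15, 23, 33], [2, 16, 21, 33], [3, 11, 25, 33],
     [4, 9, 26, 33], [5, 10, 24, 33], [6, 14, 19, 33], [7, 12, 20, 33], [8, 13, 18, 33]]
    (by decide +kernel) (by decide +kernel)

end SmallDesigns

/-! ### Recursive existence proofs -/

section Recursion

namespace HasUniformGDD

variable {k m u κ : ℕ}

theorem of_mod_le_one {E : Finset ℕ} (hk : HasUniformGDD κ m k) (hk' : HasUniformGDD κ m (k + 1))
    (hE : ∀ u ∈ E, (∀ v < u, v % k ≤ 1 → HasUniformGDD κ m v) → HasUniformGDD κ m u)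
    (hoa : ∀ u, u % k ≤ 1 ∧ u ∉ E →
      ∃ s < u, k * s ≤ u ∧ u ≤ (k + 1) * s ∧ s % k ≤ 1 ∧ HasOA (k + 1) s)
    (hu : u % k ≤ 1) : HasUniformGDD κ m u := by
  induction u using Nat.strong_induction_on with
  | _ u ih =>
  by_cases huE : u ∈ E
  · exact hE u huE ih
  obtain ⟨s, hsu, hks, hus, hs, hoa⟩ := hoa u ⟨hu, huE⟩
  obtain ⟨h, rfl⟩ := Nat.exists_eq_add_of_le hks
  have hhs : h ≤ s := by linarith
  have hh : h % k ≤ 1 := by simpa using hu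
  exact .trunc hoa hhs hk hk' (ih s hsu hs) (ih h (hhs.trans_lt hsu) hh)

theorem three_two_three : HasUniformGDD 3 2 3 := (HasOA.three 2).hasUniformGDD

theorem three_two_four : HasUniformGDD 3 2 4 :=
  .deletePoint (k := 3) (by simp) (.mul (.three 3) (.self 3) (.self 3))

theorem exists_hasOA_four (u : ℕ) (hu : u % 3 ≤ 1 ∧ u ∉ ({0, 1, 3, 4, 6, 7, 18, 19} : Finset ℕ)) :
    ∃ s < u, 3 * s ≤ u ∧ u ≤ 4 * s ∧ s % 3 ≤ 1 ∧ HasOA 4 s := by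
  obtain ⟨s, hsu, h3, h4, hs, hs2⟩ :
      ∃ s < u, 3 * s ≤ u ∧ u ≤ 4 * s ∧ s % 3 ≤ 1 ∧ (¬ 2 ∣ s ∨ 4 ∣ s) := by
    rcases lt_or_ge u 36 with hlt | hge
    · revert hu; revert u; decide +kernel
    · by_contra! h
      have h0 := h (u / 3)
      have h1 := h (u / 3 - 1)
      have h2 := h (u / 3 - 2)
      omega
  exact ⟨s, hsu, h3, h4, hs, .four hs2⟩

theorem three_two (hu : u % 3 ≤ 1) : HasUniformGDD 3 2 u := by
  refine of_mod_le_one three_two_three three_two_four (fun u hu ih => ?_)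
    exists_hasOA_four hu
  fin_cases hu
  · exact .zero 3 2
  · exact .one 3 2
  · exact three_two_three
  · exact three_two_four
  · exact .deletePoint (k := 3) (by simp) hasUniformGDD_3_1_13
  · exact .of_block (.adjoinPoint (k := 3) (by simp) three_two_three) three_two_three
  · exact .mul (.three 6) three_two_three (ih 6 (by simp) (by simp))
  · exact .mul_add_one (.three 6) three_two_three (ih 7 (by simp) (by simp))

theorem four_three_four : HasUniformGDD 4 3 4 := HasOA.hasUniformGDD (.four (by simp))

theorem four_three_five : HasUniformGDD 4 3 5 :=
  .deletePoint (k := 4) (by simp) (.mul (s := 4) (.four (by simp)) (.self 4) (.self 4))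

theorem exists_hasOA_five (u : ℕ)
    (hu : u % 4 ≤ 1 ∧ u ∉ ({0, 1, 4, 5, 8, 9, 12, 13, 28, 29, 48, 49} : Finset ℕ)) :
    ∃ s < u, 4 * s ≤ u ∧ u ≤ 5 * s ∧ s % 4 ≤ 1 ∧ HasOA 5 s := by
  obtain ⟨s, hsu, h4, h5, hs, hs2, hs3⟩ : ∃ s < u, 4 * s ≤ u ∧ u ≤ 5 * s ∧ s % 4 ≤ 1 ∧
      (¬ 2 ∣ s ∨ 4 ∣ s) ∧ (¬ 3 ∣ s ∨ 9 ∣ s) := by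
    rcases lt_or_ge u 92 with hlt | hge
    · revert hu; revert u; decide +kernel
    · -- These candidates are prime to 3, and all are 0 or 1 modulo 4.
      by_contra! h
      have h0 := h (12 * (u / 48) - 4)
      have h1 := h (12 * (u / 48) + 1)
      have h2 := h (12 * (u / 48) + 4)
      have h3 := h (12 * (u / 48) + 5)
      have h4 := h (12 * (u / 48) + 8)
      omega
  exact ⟨s, hsu, h4, h5, hs, .five hs2 hs3⟩

theorem four_three (hu : u % 4 ≤ 1) : HasUniformGDD 4 3 u := by
  refine of_mod_le_one four_three_four four_three_five (fun u hu ih => ?_)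
    exists_hasOA_five hu
  fin_cases hu
  · exact .zero 4 3
  · exact .one 4 3
  · exact four_three_four
  · exact four_three_five
  · exact .deletePoint (k := 4) (by simp) hasUniformGDD_4_1_25
  · exact hasUniformGDD_4_3_9
  · exact .deletePoint (k := 4) (by simp) hasUniformGDD_4_1_37
  · exact .of_block (.adjoinPoint (k := 4) (by simp) four_three_four) four_three_four
  · exact .of_block (.adjoinPoint (k := 4) (by simp) hasUniformGDD_4_3_9) four_three_four
  · exact .mul_add_one (.four (n := 7) (by simp)) four_three_four (ih 8 (by simp) (by simp))
  · exact .mul (.four (n := 12) (by simp)) four_three_four (ih 12 (by simp) (by simp))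
  · exact .mul_add_one (.four (n := 12) (by simp)) four_three_four (ih 13 (by simp) (by simp))

theorem five_one_twentyFive : HasUniformGDD 5 1 25 :=
  .mul (.five (n := 5) (by simp) (by simp)) (.self 5) (.self 5)

theorem five_four_five : HasUniformGDD 5 4 5 := HasOA.hasUniformGDD (.five (by simp) (by simp))

theorem five_four_six : HasUniformGDD 5 4 6 :=
  .deletePoint (k := 5) (by simp) five_one_twentyFive

theorem exists_hasOA_six (u : ℕ)
    (hu : u % 5 ≤ 1 ∧ u ∉ ({0, 1, 5, 6, 10, 11, 15, 16, 20, 31, 35, 36, 40, 50, 51, 70, 71, 75, 76,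
      100} ∪ {21, 41, 45, 46, 101, 105, 106, 110, 111, 115, 116, 120, 121, 151, 271} : Finset ℕ)) :
    ∃ s < u, 5 * s ≤ u ∧ u ≤ 6 * s ∧ s % 5 ≤ 1 ∧ HasOA 6 s := by
  obtain ⟨s, hsu, h5, h6, hs, hs2, hs3⟩ : ∃ s < u, 5 * s ≤ u ∧ u ≤ 6 * s ∧ s % 5 ≤ 1 ∧
      (¬ 2 ∣ s ∨ 8 ∣ s) ∧ (¬ 3 ∣ s ∨ 9 ∣ s) := by
    rcases lt_or_ge u 420 with hlt | hge
    · revert hu; revert u; decide +kernel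
    · -- These candidates are prime to 6, and all are 0 or 1 modulo 5.
      by_contra! h
      have h0 := h (30 * (u / 150) - 5)
      have h1 := h (30 * (u / 150) + 1)
      have h2 := h (30 * (u / 150) + 5)
      have h3 := h (30 * (u / 150) + 11)
      have h4 := h (30 * (u / 150) + 25)
      omega
  exact ⟨s, hsu, h5, h6, hs, .six hs2 hs3⟩

theorem five_one_five_mul (hu : HasUniformGDD 5 1 u) (h2 : ¬ 2 ∣ u ∨ 4 ∣ u)
    (h3 : ¬ 3 ∣ u ∨ 9 ∣ u) : HasUniformGDD 5 1 (5 * u) :=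
  .mul (.five h2 h3) (.self 5) hu

theorem five_one_five_mul_add_one (hu : HasUniformGDD 5 1 (u + 1)) (h2 : ¬ 2 ∣ u ∨ 4 ∣ u)
    (h3 : ¬ 3 ∣ u ∨ 9 ∣ u) : HasUniformGDD 5 1 (5 * u + 1) :=
  .mul_add_one (.five h2 h3) (.self 5) hu

theorem five_four_of_mem_base (hu : u ∈ ({0, 1, 5, 6, 10, 11, 15, 16, 20, 31, 35, 36, 40, 50, 51,
    70, 71, 75, 76, 100} : Finset ℕ)) : HasUniformGDD 5 4 u := by
  have delete (h : HasUniformGDD 5 1 (4 * u + 1)) : HasUniformGDD 5 4 u :=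
    .deletePoint (k := 5) (by simp) h
  fin_cases hu
  · exact .zero 5 4
  · exact .one 5 4
  · exact five_four_five
  · exact five_four_six
  · exact delete hasUniformGDD_5_1_41
  · exact delete hasUniformGDD_5_5_9.one_mul
  · exact delete hasUniformGDD_5_1_61
  · exact delete hasUniformGDD_5_5_13.one_mul
  · exact delete hasUniformGDD_5_1_81
  · exact delete (five_one_five_mul five_one_twentyFive (by simp) (by simp))
  · exact delete hasUniformGDD_5_1_141
  · exact delete hasUniformGDD_5_5_29.one_mul
  · exact delete hasUniformGDD_5_1_161
  · exact delete (five_one_five_mul_add_one (u := 40) hasUniformGDD_5_1_41 (by simp) (by simp))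
  · exact delete (five_one_five_mul hasUniformGDD_5_1_41 (by simp) (by simp))
  · exact delete hasUniformGDD_5_1_281
  · exact delete hasUniformGDD_5_5_57.one_mul
  · exact delete hasUniformGDD_5_1_301
  · exact delete (five_one_five_mul hasUniformGDD_5_1_61 (by simp) (by simp))
  · exact delete (five_one_five_mul_add_one (u := 80) hasUniformGDD_5_1_81 (by simp) (by simp))

theorem five_four_of_mem_recursive (hu : u ∈ ({21, 41, 45, 46, 101, 105, 106, 110, 111, 115, 116,
    120, 121, 151, 271} : Finset ℕ)) (ih : ∀ v < u, v % 5 ≤ 1 → HasUniformGDD 5 4 v) :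
    HasUniformGDD 5 4 u := by
  have adjoin (v : ℕ) (hv : v < u) (hv5 : v % 5 ≤ 1) : HasUniformGDD 5 1 (4 * v + 1) :=
    .adjoinPoint (k := 5) (by simp) (ih v hv hv5)
  have delete (h : HasUniformGDD 5 1 (4 * u + 1)) : HasUniformGDD 5 4 u :=
    .deletePoint (k := 5) (by simp) h
  have trunc_eleven (h : ℕ) (hu : 10 * 11 + h = u) (hh : h ≤ 11) (hh5 : h % 5 ≤ 1) :
      HasUniformGDD 5 4 u :=
    hu ▸ .trunc (.of_prime_pow (p := 11) (e := 1) (by norm_num) one_ne_zero (by simp)) hh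
      (ih 10 (by lia) (by simp)) (ih 11 (by lia) (by simp)) (ih 11 (by lia) (by simp))
      (ih h (by lia) hh5)
  fin_cases hu
  · exact .of_block (adjoin 5 (by simp) (by simp)) five_four_five
  · exact .of_block (adjoin 10 (by simp) (by simp)) five_four_five
  · exact .of_block (adjoin 11 (by simp) (by simp)) five_four_five
  · exact .mul_add_one (.five (n := 9) (by simp) (by simp)) five_four_five
      (ih 10 (by simp) (by simp))
  · exact .of_block (adjoin 25 (by simp) (by simp)) five_four_five
  · exact .of_block (adjoin 26 (by simp) (by simp)) five_four_five
  · exact delete (five_one_five_mul (adjoin 21 (by simp) (by simp)) (by simp) (by simp))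
  · exact trunc_eleven 0 (by simp) (by simp) (by simp)
  · exact trunc_eleven 1 (by simp) (by simp) (by simp)
  · exact trunc_eleven 5 (by simp) (by simp) (by simp)
  · exact trunc_eleven 6 (by simp) (by simp) (by simp)
  · exact trunc_eleven 10 (by simp) (by simp) (by simp)
  · exact trunc_eleven 11 (by simp) (by simp) (by simp)
  · exact delete (five_one_five_mul (adjoin 30 (by simp) (by simp)) (by simp) (by simp))
  · exact .mul_add_one (.six (n := 45) (by simp) (by simp)) five_four_six
      (ih 46 (by simp) (by simp))

theorem five_four (hu : u % 5 ≤ 1) : HasUniformGDD 5 4 u :=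
  of_mod_le_one five_four_five five_four_six
    (fun _ hu ih => (Finset.mem_union.1 hu).elim five_four_of_mem_base
      (five_four_of_mem_recursive · ih)) exists_hasOA_six hu

theorem four_four_four : HasUniformGDD 4 4 4 := HasOA.hasUniformGDD (.four (by simp))

theorem four_eight_four : HasUniformGDD 4 8 4 := HasOA.hasUniformGDD (.four (by simp))

theorem four_eight_seven : HasUniformGDD 4 8 7 := hasUniformGDD_4_2_7.mul_groupSize four_four_four

theorem _root_.HasPBD.four_eight (h : HasPBD {4, 7} (Fin u)) : HasUniformGDD 4 8 u := by
  simpa using h.hasUniformGDD (by rintro n (rfl | rfl); exacts [four_eight_four, four_eight_seven])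

theorem _root_.HasGDD.four_eight {V G : Type} [Finite V] [Finite G] {S : Set ℕ} {grp : V → G}
    (h : HasGDD S grp) (hS : ∀ n ∈ S, HasUniformGDD 4 3 n)
    (hgrp : ∀ g, HasUniformGDD 4 8 (3 * Nat.card {v // grp v = g} + 1)) :
    HasUniformGDD 4 8 (3 * Nat.card V + 1) := by
  have := (h.hasGDD_comp_fst hS).mono (T := {n | HasUniformGDD 4 8 n})
    (by rintro n rfl; exact four_eight_four)
  have := (HasGDD.hasPBD_option this fun g => by
    have := card_fiber_comp_fst grp 3 g
    have := hgrp g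
    simp_all [mul_comm]).hasUniformGDD fun _ => id
  simpa [mul_comm] using this

theorem four_eight_three_mul (h : HasUniformGDD 4 m u) (hm : HasUniformGDD 4 8 (3 * m + 1)) :
    HasUniformGDD 4 8 (3 * (u * m) + 1) := by
  simpa using HasGDD.four_eight h (by rintro n rfl; exact four_three_four)
    fun g => by rwa [card_fiber_fst]

theorem four_eight_trunc {s h : ℕ} (hs : HasOA 5 s) (hh : h ≤ s)
    (h8s : HasUniformGDD 4 8 (3 * s + 1)) (h8h : HasUniformGDD 4 8 (3 * h + 1)) :
    HasUniformGDD 4 8 (3 * (4 * s + h) + 1) := by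
  have := hasGDD_truncatedGroup hs.hasUniformGDD hh
  simpa using this.four_eight
    (by rintro n (rfl | rfl); exacts [four_three_four, four_three_five])
    fun g => by rw [card_fiber_truncatedGroup]; split_ifs <;> assumption

theorem exists_hasOA_five_of_two_le_mod (t : ℕ)
    (ht : 2 ≤ t % 4 ∧ t ∉ ({2, 3, 6, 7, 10, 11, 14, 15, 26, 27} : Finset ℕ)) :
    ∃ s < t, 4 * s ≤ t ∧ t ≤ 5 * s ∧ HasOA 5 s := by
  obtain ⟨s, hst, h4, h5, hs2, hs3⟩ : ∃ s < t, 4 * s ≤ t ∧ t ≤ 5 * s ∧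
      (¬ 2 ∣ s ∨ 4 ∣ s) ∧ (¬ 3 ∣ s ∨ 9 ∣ s) := by
    rcases lt_or_ge t 56 with hlt | hge
    · revert ht; revert t; decide +kernel
    · by_contra! h
      have h0 := h (t / 4)
      have h1 := h (t / 4 - 1)
      have h2 := h (t / 4 - 2)
      omega
  exact ⟨s, hst, h4, h5, .five hs2 hs3⟩

theorem four_eight (t : ℕ) : HasUniformGDD 4 8 (3 * t + 1) := by
  induction t using Nat.strong_induction_on with
  | _ t ih =>
  by_cases ht : t % 4 ≤ 1
  · exact .of_block (.adjoinPoint (k := 4) (by simp) (four_three ht)) four_eight_four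
  by_cases htE : t ∈ ({2, 3, 6, 7, 10, 11, 14, 15, 26, 27} : Finset ℕ)
  · clear ih ht
    fin_cases htE
    · exact four_eight_seven
    · exact hasUniformGDD_4_8_10
    · exact hasUniformGDD_4_2_19.mul_groupSize four_four_four
    · exact hasPBD_4_7_22.four_eight
    · exact hasUniformGDD_4_2_31.mul_groupSize four_four_four
    · exact hasPBD_4_7_34.four_eight
    · exact four_eight_three_mul hasUniformGDD_4_2_7 four_eight_seven
    · exact four_eight_three_mul four_three_five hasUniformGDD_4_8_10
    · exact four_eight_three_mul hasUniformGDD_4_2_13 four_eight_seven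
    · exact four_eight_three_mul hasUniformGDD_4_3_9 hasUniformGDD_4_8_10
  obtain ⟨s, hst, h4, h5, hs⟩ := exists_hasOA_five_of_two_le_mod t ⟨by omega, htE⟩
  obtain ⟨h, rfl⟩ := Nat.exists_eq_add_of_le h4
  exact four_eight_trunc hs (by omega) (ih s hst) (ih h (by omega))

end HasUniformGDD
end Recursion

/-! ### Equiangular vectors -/

section Equiangular

open Matrix
open scoped ComplexOrder

variable {𝕜 : Type*} [RCLike 𝕜] {d e n : Type*} [Fintype d] [Fintype e] [Fintype n]

theorem eq_smul_one_of_trace_sq [DecidableEq d] {A : Matrix d d 𝕜} (hA : A.IsHermitian)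
    (h : (A * A).trace * Fintype.card d = A.trace ^ 2) :
    A = (A.trace / Fintype.card d) • (1 : Matrix d d 𝕜) := by
  cases isEmpty_or_nonempty d
  · exact Subsingleton.elim _ _
  have hd : (Fintype.card d : 𝕜) ≠ 0 := Nat.cast_ne_zero.2 Fintype.card_ne_zero
  set c := A.trace / Fintype.card d with hc
  have hcA : A.trace = c * Fintype.card d := (div_mul_cancel₀ _ hd).symm
  have hc_star : star c = c := by
    rw [hc, star_div₀, star_natCast, ← trace_conjTranspose, hA.eq]
  have hself : (A - c • 1)ᴴ = A - c • 1 := by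
    rw [conjTranspose_sub, hA.eq, conjTranspose_smul, conjTranspose_one, hc_star]
  have hsq : (A * A).trace = c * (c * Fintype.card d) := by
    rw [← mul_left_inj' hd, h, hcA]
    ring
  rw [← sub_eq_zero, ← trace_conjTranspose_mul_self_eq_zero_iff, hself]
  simp only [sub_mul, mul_sub, trace_sub, smul_mul, Matrix.mul_smul, one_mul, mul_one, trace_smul,
    trace_one, smul_eq_mul, hsq, hcA]
  ring

theorem orthonormal_star_row {d : Type*} [DecidableEq d] {A : Matrix d n 𝕜} (hA : A * Aᴴ = 1) :
    Orthonormal 𝕜 fun i => (WithLp.toLp 2 (star (A i)) : EuclideanSpace 𝕜 n) := by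
  rw [orthonormal_iff_ite]
  intro i j
  rw [← one_apply, ← hA, EuclideanSpace.inner_toLp_toLp, star_star, dotProduct_comm]
  rfl

theorem conjTranspose_mul_self_of_orthonormalBasis [DecidableEq n]
    (b : OrthonormalBasis d 𝕜 (EuclideanSpace 𝕜 n)) :
    (of fun i x => star (b i x))ᴴ * (of fun i x => star (b i x)) = 1 := by
  ext x y
  have h := b.sum_inner_mul_inner (EuclideanSpace.single x 1) (EuclideanSpace.single y 1)
  simpa [EuclideanSpace.inner_single_left, EuclideanSpace.inner_single_right, mul_apply,
    one_apply, eq_comm] using h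

/-- The Naimark complement of a Parseval frame. -/
theorem exists_conjTranspose_mul_self_eq_one_sub [DecidableEq d] [DecidableEq n]
    {A : Matrix d n 𝕜} (hA : A * Aᴴ = 1)
    (hcard : Fintype.card n = Fintype.card d + Fintype.card e) :
    ∃ Ψ : Matrix e n 𝕜, Ψᴴ * Ψ = 1 - Aᴴ * A := by
  let v : d ⊕ e → EuclideanSpace 𝕜 n := Sum.elim (fun i => WithLp.toLp 2 (star (A i))) 0
  have hv : Orthonormal 𝕜 ((Set.range (Sum.inl : d → d ⊕ e)).domRestrict v) := by
    have hrestrict : (Set.range Sum.inl).domRestrict v = (fun i => WithLp.toLp 2 (star (A i))) ∘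
        (Equiv.ofInjective (Sum.inl : d → d ⊕ e) Sum.inl_injective).symm := by
      ext1 ⟨_, i, rfl⟩
      simp [v]
    rw [hrestrict]
    exact (orthonormal_star_row hA).comp _ (Equiv.injective _)
  obtain ⟨b, hb⟩ := hv.exists_orthonormalBasis_extension_of_card_eq (by simp [hcard])
  let Ψ : Matrix e n 𝕜 := of fun k x => star (b (Sum.inr k) x)
  have hrows : fromRows A Ψ = of fun i x => star (b i x) := by
    ext (i | k) x
    · simp [hb (Sum.inl i) ⟨i, rfl⟩, v]
    · rfl
  refine ⟨Ψ, eq_sub_of_add_eq ?_⟩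
  rw [← conjTranspose_mul_self_of_orthonormalBasis b, ← hrows,
    conjTranspose_fromRows_eq_fromCols_conjTranspose, fromCols_mul_fromRows, add_comm]

/-- The columns of `Φ` are vectors of squared norm `s` whose pairwise inner products have squared
modulus `t`. -/
structure IsEquiangular (Φ : Matrix d n ℂ) (s t : ℝ) : Prop where
  gram_self : ∀ a, (Φᴴ * Φ) a a = s
  norm_gram_sq : ∀ {a b}, a ≠ b → ‖(Φᴴ * Φ) a b‖ ^ 2 = t

/-- There are `N` unit vectors in `ℂ ^ D` whose pairwise inner products have squared modulus `t`. -/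
def HasEquiangular (D N : ℕ) (t : ℝ) : Prop :=
  ∃ Φ : Matrix (Fin D) (Fin N) ℂ, IsEquiangular Φ 1 t

theorem IsEquiangular.hasEquiangular {Φ : Matrix d n ℂ} {t : ℝ} (h : IsEquiangular Φ 1 t) :
    HasEquiangular (Fintype.card d) (Fintype.card n) t := by
  let f := Fintype.equivFin d
  let g := Fintype.equivFin n
  have hgram : (Φ.submatrix f.symm g.symm)ᴴ * Φ.submatrix f.symm g.symm =
      (Φᴴ * Φ).submatrix g.symm g.symm := by
    rw [conjTranspose_submatrix, submatrix_mul_equiv]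
  refine ⟨Φ.submatrix f.symm g.symm, fun a => ?_, fun {a b} hab => ?_⟩
  · rw [hgram, submatrix_apply, h.gram_self]
  · rw [hgram, submatrix_apply, h.norm_gram_sq (g.symm.injective.ne hab)]

namespace IsEquiangular

variable {Φ : Matrix d n ℂ} {s t : ℝ}

theorem trace_mul_conjTranspose (h : IsEquiangular Φ s t) :
    (Φ * Φᴴ).trace = Fintype.card n * s := by
  rw [trace_mul_comm]
  simp [trace, h.gram_self]

theorem trace_mul_conjTranspose_sq (h : IsEquiangular Φ s t) :
    (Φ * Φᴴ * (Φ * Φᴴ)).trace =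
      Fintype.card n * (s ^ 2 + ((Fintype.card n : ℝ) - 1) * t : ℝ) := by
  classical
  have hentry (a b : n) : star ((Φᴴ * Φ) b a) * (Φᴴ * Φ) b a =
      ((t + if b = a then s ^ 2 - t else 0 : ℝ) : ℂ) := by
    rw [Complex.star_def, Complex.conj_mul', ← Complex.ofReal_pow]
    congr 1
    split_ifs with hba
    · rw [hba, h.gram_self, Complex.norm_real, Real.norm_eq_abs, sq_abs]
      ring
    · rw [h.norm_gram_sq hba, add_zero]
  have hdiag (a : n) : ((Φᴴ * Φ)ᴴ * (Φᴴ * Φ)) a a =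
      (s ^ 2 + ((Fintype.card n : ℝ) - 1) * t : ℝ) := by
    simp only [mul_apply (M := (Φᴴ * Φ)ᴴ), conjTranspose_apply (M := Φᴴ * Φ), hentry,
      ← Complex.ofReal_sum, Finset.sum_add_distrib, Finset.sum_const, Finset.sum_ite_eq',
      Finset.mem_univ, if_true, Finset.card_univ, nsmul_eq_mul]
    congr 1
    ring
  have hcycle : (Φ * Φᴴ * (Φ * Φᴴ)).trace = ((Φᴴ * Φ)ᴴ * (Φᴴ * Φ)).trace := by
    rw [Matrix.mul_assoc, trace_mul_comm, conjTranspose_mul, conjTranspose_conjTranspose,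
      Matrix.mul_assoc, Matrix.mul_assoc, Matrix.mul_assoc]
  rw [hcycle, trace, Finset.sum_congr rfl fun a _ => (diag_apply _ a).trans (hdiag a)]
  simp only [Finset.sum_const, Finset.card_univ, nsmul_eq_mul]

/-- Vectors meeting the Welch bound form a tight frame. -/
theorem mul_conjTranspose_eq_smul_one [DecidableEq d] (h : IsEquiangular Φ s t)
    (hw : (s ^ 2 + ((Fintype.card n : ℝ) - 1) * t) * Fintype.card d = Fintype.card n * s ^ 2) :
    Φ * Φᴴ = ((Fintype.card n * s / Fintype.card d : ℝ) : ℂ) • (1 : Matrix d d ℂ) := by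
  have hw' := congrArg (Complex.ofReal) hw
  push_cast at hw'
  rw [eq_smul_one_of_trace_sq (isHermitian_mul_conjTranspose_self Φ), h.trace_mul_conjTranspose]
  · push_cast
    rfl
  · rw [h.trace_mul_conjTranspose, h.trace_mul_conjTranspose_sq]
    push_cast
    linear_combination (Fintype.card n : ℂ) * hw'

end IsEquiangular

theorem exists_conjTranspose_mul_self_eq_one_sub_smul [DecidableEq d] [DecidableEq n]
    {Φ : Matrix d n ℂ} {a : ℝ} (ha : 0 < a) (hΦ : Φ * Φᴴ = (a : ℂ) • (1 : Matrix d d ℂ))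
    (hcard : Fintype.card n = Fintype.card d + Fintype.card e) :
    ∃ Ψ : Matrix e n ℂ, Ψᴴ * Ψ = 1 - (a : ℂ)⁻¹ • (Φᴴ * Φ) := by
  let c : ℂ := ((√a : ℝ) : ℂ)⁻¹
  have hc : starRingEnd ℂ c * c = (a : ℂ)⁻¹ := by
    rw [map_inv₀, Complex.conj_ofReal, ← mul_inv, ← Complex.ofReal_mul,
      Real.mul_self_sqrt ha.le]
  have ha' : (a : ℂ) ≠ 0 := Complex.ofReal_ne_zero.2 ha.ne'
  have hparseval : (c • Φ) * (c • Φ)ᴴ = 1 := by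
    rw [conjTranspose_smul, smul_mul, Matrix.mul_smul, hΦ, smul_smul, smul_smul, mul_comm c,
      Complex.star_def, hc, inv_mul_cancel₀ ha', one_smul]
  obtain ⟨Ψ, hΨ⟩ := exists_conjTranspose_mul_self_eq_one_sub (e := e) hparseval hcard
  exact ⟨Ψ, by simpa [smul_smul, mul_comm c, hc] using hΨ⟩

theorem IsEquiangular.of_gram_eq_smul_one_sub {n : Type*} [DecidableEq n] {Φ : Matrix d n ℂ}
    {Ψ : Matrix e n ℂ} {s t b c : ℝ} (h : IsEquiangular Φ s t)
    (hΨ : Ψᴴ * Ψ = (b : ℂ) • (1 - (c : ℂ) • (Φᴴ * Φ))) :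
    IsEquiangular Ψ (b * (1 - c * s)) ((b * c) ^ 2 * t) where
  gram_self a := by simp [hΨ, h.gram_self]
  norm_gram_sq {x y} hxy := by
    rw [hΨ, Matrix.smul_apply, Matrix.sub_apply, one_apply_ne hxy, zero_sub, Matrix.smul_apply,
      smul_eq_mul, smul_eq_mul, norm_mul, norm_neg, norm_mul, mul_pow, mul_pow, h.norm_gram_sq hxy]
    simp only [Complex.norm_real, Real.norm_eq_abs, sq_abs]
    ring

theorem IsEquiangular.hasEquiangular_complement {Φ : Matrix d n ℂ} {s t q : ℝ}
    (h : IsEquiangular Φ s t) (hs : 0 < s) [Nonempty d] {D : ℕ} (hD : 0 < D)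
    (hcard : Fintype.card n = Fintype.card d + D)
    (hw : (s ^ 2 + ((Fintype.card n : ℝ) - 1) * t) * Fintype.card d = Fintype.card n * s ^ 2)
    (hq : Fintype.card d * q = s * D) : HasEquiangular D (Fintype.card n) (t / q ^ 2) := by
  classical
  have hd : (0 : ℝ) < Fintype.card d := Nat.cast_pos.2 Fintype.card_pos
  have he : (0 : ℝ) < D := Nat.cast_pos.2 hD
  have hn : (Fintype.card n : ℝ) = Fintype.card d + D := by simp [hcard]
  have hN : (0 : ℝ) < Fintype.card n := hn ▸ add_pos hd he
  have hq0 : q ≠ 0 := by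
    rintro rfl
    exact (mul_pos hs he).ne (by rw [← hq, mul_zero])
  obtain ⟨Ψ, hΨ⟩ := exists_conjTranspose_mul_self_eq_one_sub_smul (e := Fin D)
    (by positivity) (h.mul_conjTranspose_eq_smul_one hw) (by rw [hcard, Fintype.card_fin])
  let b : ℝ := Fintype.card n / D
  have hb : (0 : ℝ) ≤ b := by positivity
  have hgram : (((√b : ℝ) : ℂ) • Ψ)ᴴ * (((√b : ℝ) : ℂ) • Ψ) = (b : ℂ) • (1 -
      (((Fintype.card n * s / Fintype.card d)⁻¹ : ℝ) : ℂ) • (Φᴴ * Φ)) := by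
    rw [conjTranspose_smul, smul_mul, Matrix.mul_smul, smul_smul, hΨ, Complex.star_def,
      Complex.conj_ofReal, ← Complex.ofReal_mul, Real.mul_self_sqrt hb, Complex.ofReal_inv]
  have hΦΨ := h.of_gram_eq_smul_one_sub hgram
  have hself : b * (1 - (Fintype.card n * s / Fintype.card d)⁻¹ * s) = 1 := by
    simp only [b]
    field_simp
    linarith
  have hoff : (b * (Fintype.card n * s / Fintype.card d)⁻¹) ^ 2 * t = t / q ^ 2 := by
    rw [eq_div_iff (pow_ne_zero 2 hq0), mul_right_comm, ← mul_pow]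
    have hone : b * (Fintype.card n * s / Fintype.card d)⁻¹ * q = 1 := by
      simp only [b]
      field_simp
      linarith
    rw [hone, one_pow, one_mul]
  rw [hself, hoff] at hΦΨ
  simpa only [Fintype.card_fin] using hΦΨ.hasEquiangular

theorem sum_inner_smul_eq_smul [DecidableEq d] {Φ : Matrix d n 𝕜} {a : 𝕜}
    (hΦ : Φ * Φᴴ = a • (1 : Matrix d d 𝕜)) (y : EuclideanSpace 𝕜 d) :
    ∑ i, inner 𝕜 (WithLp.toLp 2 (Φᵀ i) : EuclideanSpace 𝕜 d) y • WithLp.toLp 2 (Φᵀ i) = a • y := by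
  have hy : Φ *ᵥ Φᴴ *ᵥ y.ofLp = a • y.ofLp := by
    rw [mulVec_mulVec, hΦ, smul_mulVec, one_mulVec]
  ext j
  rw [PiLp.smul_apply, ← Pi.smul_apply, ← hy]
  simp only [WithLp.ofLp_sum, Finset.sum_apply, PiLp.smul_apply, smul_eq_mul, mulVec, dotProduct]
  refine Finset.sum_congr rfl fun i _ => ?_
  rw [mul_comm]
  congr 1
  simp [PiLp.inner_apply, mul_comm]

theorem IsEquiangular.isETF [Nonempty d] {Φ : Matrix d n ℂ} {t : ℝ} (h : IsEquiangular Φ 1 t)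
    (hw : (1 + ((Fintype.card n : ℝ) - 1) * t) * Fintype.card d = Fintype.card n) :
    IsETF (Fintype.card d) (Fintype.card n)
      fun a => (WithLp.toLp 2 (Φᵀ a) : EuclideanSpace ℂ d) := by
  classical
  have hd : (Fintype.card d : ℝ) ≠ 0 := Nat.cast_ne_zero.2 Fintype.card_ne_zero
  have hinner (a b : n) : inner ℂ (WithLp.toLp 2 (Φᵀ a) : EuclideanSpace ℂ d)
      (WithLp.toLp 2 (Φᵀ b)) = (Φᴴ * Φ) a b := by
    rw [EuclideanSpace.inner_toLp_toLp, dotProduct_comm]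
    rfl
  refine ⟨fun a => ?_, fun a b hab => ?_, fun y => ?_⟩
  · rw [norm_eq_sqrt_re_inner (𝕜 := ℂ), hinner, h.gram_self]
    simp
  · have : Nontrivial n := ⟨a, b, hab⟩
    have hn : (Fintype.card n : ℝ) - 1 ≠ 0 :=
      sub_ne_zero.2 (Nat.cast_ne_one.2 Fintype.one_lt_card.ne')
    rw [hinner, h.norm_gram_sq hab, eq_div_iff (mul_ne_zero hd hn)]
    linear_combination hw
  · rw [sum_inner_smul_eq_smul (h.mul_conjTranspose_eq_smul_one (by linear_combination hw))]
    simp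

theorem HasEquiangular.exists_isETF {D N : ℕ} {t : ℝ} (hD : 0 < D) (h : HasEquiangular D N t)
    (hw : (1 + ((N : ℝ) - 1) * t) * D = N) :
    ∃ φ : Fin N → EuclideanSpace ℂ (Fin D), IsETF D N φ := by
  obtain ⟨Φ, hΦ⟩ := h
  have : NeZero D := ⟨hD.ne'⟩
  have hETF := hΦ.isETF (by simpa only [Fintype.card_fin] using hw)
  rw [Fintype.card_fin, Fintype.card_fin] at hETF
  exact ⟨_, hETF⟩

end Equiangular

/-! ### Equiangular vectors from designs -/

section CountBlocks

variable {V G ι : Type} [Finite V] [Finite ι] {grp : V → G} {B : ι → Set V} {k : ℕ}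

theorem IsGDD.card_grp_ne_eq (h : IsGDD {k} grp B) (x : V) :
    Nat.card {y // grp y ≠ grp x} = Nat.card {i // x ∈ B i} * (k - 1) := by
  let f (p : Σ i : {i // x ∈ B i}, {y // y ∈ B i.1 \ {x}}) : {y // grp y ≠ grp x} :=
    ⟨p.2.1, fun hp => p.2.2.2 (h.eq_of_grp_eq p.2.2.1 p.1.2 hp)⟩
  have hf : f.Bijective := by
    refine ⟨?_, fun ⟨y, hy⟩ => ?_⟩
    · rintro ⟨⟨i, hi⟩, y, hyi, hyx⟩ ⟨⟨j, hj⟩, z, hzj, _⟩ hyz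
      obtain rfl : y = z := congrArg Subtype.val hyz
      obtain rfl : i = j := h.index_eq (f ⟨⟨i, hi⟩, y, hyi, hyx⟩).2 hyi hi hzj hj
      rfl
    · obtain ⟨i, ⟨hxi, hyi⟩, -⟩ := h.existsUnique_mem hy.symm
      exact ⟨⟨⟨i, hxi⟩, y, hyi, fun hyx => hy (congrArg grp hyx)⟩, rfl⟩
  have hcard (i : {i // x ∈ B i}) : Nat.card {y // y ∈ B i.1 \ {x}} = k - 1 := by
    rw [← h.ncard_mem i.1, ← Set.ncard_sdiff_singleton_of_mem i.2]
    rfl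
  have := Fintype.ofFinite {i // x ∈ B i}
  rw [← Nat.card_congr (Equiv.ofBijective f hf), Nat.card_sigma, Finset.sum_congr rfl fun i _ =>
    hcard i, Finset.sum_const, Finset.card_univ, smul_eq_mul, Nat.card_eq_fintype_card]

theorem IsGDD.card_index_mul {r : ℕ} (h : IsGDD {k} grp B)
    (hr : ∀ x, Nat.card {i // x ∈ B i} = r) : Nat.card ι * k = Nat.card V * r := by
  have := Fintype.ofFinite V
  have := Fintype.ofFinite ι
  let f : (Σ i, B i) ≃ Σ x, {i // x ∈ B i} :=
    { toFun := fun p => ⟨p.2, p.1, p.2.2⟩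
      invFun := fun p => ⟨p.2, p.1, p.2.2⟩ }
  have hf := Nat.card_congr f
  have hB (i : ι) : Nat.card (B i) = k := h.ncard_mem i
  rw [Nat.card_sigma, Nat.card_sigma, Finset.sum_congr rfl fun x _ => hr x,
    Finset.sum_congr rfl fun i _ => hB i] at hf
  simpa [Nat.card_eq_fintype_card] using hf

end CountBlocks

section BlockMatrix

open Matrix
open scoped Classical in
/-- The matrix obtained from the block-point incidence matrix of `B` by replacing, in the column of
each point `x`, the zeros by zero rows and the ones by the distinct rows of `H`, in the order `e x`.
-/
noncomputable def blockMatrix {V ι ρ J : Type} (B : ι → Set V) (e : ∀ x, {i // x ∈ B i} ≃ ρ)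
    (H : Matrix ρ J ℂ) : Matrix ι (V × J) ℂ :=
  of fun i p => if h : p.1 ∈ B i then H (e p.1 ⟨i, h⟩) p.2 else 0

variable {V G ι ρ J : Type} [Fintype ι] {grp : V → G} {B : ι → Set V}
  {e : ∀ x, {i // x ∈ B i} ≃ ρ} {H : Matrix ρ J ℂ} {S : Set ℕ} {k : ℕ}

theorem blockMatrix_gram_same [Fintype ρ] (x : V) (a b : J) :
    ((blockMatrix B e H)ᴴ * blockMatrix B e H) (x, a) (x, b) = (Hᴴ * H) a b := by
  classical
  rw [mul_apply, mul_apply, ← Equiv.sum_comp (e x),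
    ← Fintype.sum_subtype_add_sum_subtype (fun i => x ∈ B i),
    Finset.sum_eq_zero (s := (Finset.univ : Finset {i // x ∉ B i})), add_zero]
  · exact Finset.sum_congr rfl fun i _ => by simp [blockMatrix, i.2]
  · intro i _
    simp [blockMatrix, i.2]

theorem IsGDD.blockMatrix_gram_of_grp_eq (h : IsGDD S grp B) {x y : V} (hxy : x ≠ y)
    (hgrp : grp x = grp y) (a b : J) :
    ((blockMatrix B e H)ᴴ * blockMatrix B e H) (x, a) (y, b) = 0 := by
  refine Finset.sum_eq_zero fun i _ => ?_
  by_cases hx : x ∈ B i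
  · have hy : y ∉ B i := fun hy => hxy (h.eq_of_grp_eq hx hy hgrp)
    simp [blockMatrix, hy]
  · simp [blockMatrix, hx]

theorem IsGDD.norm_blockMatrix_gram_of_grp_ne (h : IsGDD S grp B) (hH : ∀ r a, ‖H r a‖ = 1)
    {x y : V} (hgrp : grp x ≠ grp y) (a b : J) :
    ‖((blockMatrix B e H)ᴴ * blockMatrix B e H) (x, a) (y, b)‖ = 1 := by
  obtain ⟨i, ⟨hx, hy⟩, -⟩ := h.existsUnique_mem hgrp
  rw [mul_apply, Fintype.sum_eq_single i]
  · simp [blockMatrix, hx, hy, hH]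
  · intro j hj
    have : x ∉ B j ∨ y ∉ B j := by
      by_contra! hxy
      exact hj (h.index_eq hgrp hxy.1 hxy.2 hx hy)
    rcases this with hx | hy
    · simp [blockMatrix, hx]
    · simp [blockMatrix, hy]

theorem HasGDD.exists_isGDD_equiv [Fintype V] [Fintype ρ] (h : HasGDD {k} grp) (hk : 2 ≤ k)
    (hρ : ∀ x, Nat.card {y // grp y ≠ grp x} = Fintype.card ρ * (k - 1)) :
    ∃ (ι : Type) (_ : Fintype ι) (B : ι → Set V), IsGDD {k} grp B ∧
      Fintype.card ι * k = Fintype.card V * Fintype.card ρ ∧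
      Nonempty (∀ x, {i // x ∈ B i} ≃ ρ) := by
  obtain ⟨ι, _, B, hB⟩ := h
  have := Fintype.ofFinite ι
  have hcard (x : V) : Nat.card {i // x ∈ B i} = Nat.card ρ := by
    rw [Nat.card_eq_fintype_card (α := ρ)]
    exact Nat.eq_of_mul_eq_mul_right (by lia) ((hB.card_grp_ne_eq x).symm.trans (hρ x))
  refine ⟨ι, this, B, hB, ?_, ⟨fun x => (Finite.card_eq.1 (hcard x)).some⟩⟩
  simpa only [Nat.card_eq_fintype_card] using hB.card_index_mul hcard

end BlockMatrix

section Fourier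

open Matrix

/-- The character table of `ZMod n`. -/
noncomputable def fourierMatrix (n : ℕ) [NeZero n] : Matrix (ZMod n) (ZMod n) ℂ :=
  of fun i j => ZMod.stdAddChar (i * j)

/-- The nontrivial characters of `ZMod n`; the columns form a regular simplex. -/
noncomputable def simplexMatrix (n : ℕ) [NeZero n] : Matrix {z : ZMod n // z ≠ 0} (ZMod n) ℂ :=
  of fun i j => fourierMatrix n i j

variable (n : ℕ) [NeZero n]

theorem card_zmod_ne_zero : Fintype.card {z : ZMod n // z ≠ 0} = n - 1 := by
  rw [Fintype.card_subtype_compl]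
  simp [ZMod.card]

theorem norm_fourierMatrix (i j : ZMod n) : ‖fourierMatrix n i j‖ = 1 := by
  simp [fourierMatrix, AddChar.norm_apply]

theorem norm_simplexMatrix (i : {z : ZMod n // z ≠ 0}) (j : ZMod n) : ‖simplexMatrix n i j‖ = 1 :=
  norm_fourierMatrix n i j

theorem fourierMatrix_zero_left (j : ZMod n) : fourierMatrix n 0 j = 1 := by
  simp [fourierMatrix]

theorem fourierMatrix_gram (i j : ZMod n) :
    ((fourierMatrix n)ᴴ * fourierMatrix n) i j = if i = j then (n : ℂ) else 0 := by
  have hterm (z : ZMod n) : star (fourierMatrix n z i) * fourierMatrix n z j =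
      ZMod.stdAddChar (z * (j - i)) := by
    rw [fourierMatrix, of_apply, of_apply, Complex.star_def, ← AddChar.map_neg_eq_conj,
      ← AddChar.map_add_eq_mul]
    congr 1
    ring
  have hsum := AddChar.sum_mulShift (j - i) (ZMod.isPrimitive_stdAddChar n)
  simp_all [mul_apply, sub_eq_zero, eq_comm]

theorem simplexMatrix_gram (i j : ZMod n) :
    ((simplexMatrix n)ᴴ * simplexMatrix n) i j = (if i = j then (n : ℂ) else 0) - 1 := by
  rw [← fourierMatrix_gram, mul_apply, mul_apply,
    Fintype.sum_eq_add_sum_subtype_ne (fun z => (fourierMatrix n)ᴴ i z * fourierMatrix n z j) 0]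
  simp [fourierMatrix_zero_left, simplexMatrix]

end Fourier

section Seed

open Matrix

/-- The first member `J = 1` of the family of equiangular tight frames attached to `K`, `L`, `Q`,
given as `N` equiangular unit vectors in `ℂ ^ D` whose pairwise inner products have modulus `1 / Q`;
the bound on `N` leaves room to attach distinct multiplicative characters of `𝔽_{Q ^ 2}` to them.
-/
def HasETFSeed (K : ℕ) (L : ℤ) (Q : ℕ) : Prop :=
  ∃ D N : ℕ, 0 < D ∧ (D : ℤ) * K = (Q - (K - 1) * L) * Q ∧
    (N : ℤ) * (K - 1) = (Q - (K - 1) * L) * (Q - L) ∧ N < Q ^ 2 ∧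
    HasEquiangular D N (1 / (Q : ℝ) ^ 2)

theorem IsEquiangular.hasETFSeed {d n : Type} [Fintype d] [Fintype n] {Φ : Matrix d n ℂ}
    {s K Q : ℕ} {L : ℤ} (h : IsEquiangular Φ s 1) (hs : 0 < s) (hK : 2 ≤ K) (hL : L ^ 2 = 1)
    [Nonempty d] (hQ : (Q : ℤ) = s * (K - 1) + K * L)
    (hd : (Fintype.card d : ℤ) * K = (s * (K - 1) + L) * s)
    (hn : (Fintype.card n : ℤ) = (s * (K - 1) + L) * (s + L)) (hlt : Fintype.card n < Q ^ 2) :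
    HasETFSeed K L Q := by
  have hK0 : (0 : ℤ) < K := by lia
  have hd0 : (0 : ℤ) < Fintype.card d := Nat.cast_pos.2 Fintype.card_pos
  have hQ0 : (0 : ℤ) < Q := Nat.cast_pos.2 (Nat.pos_of_ne_zero (by rintro rfl; simp at hlt))
  have hcompl : (Fintype.card n - Fintype.card d : ℤ) * K = (s * (K - 1) + L) * Q := by
    linear_combination K * hn - hd - (s * (K - 1) + L) * hQ
  have hcompl_pos : (0 : ℤ) < Fintype.card n - Fintype.card d := by
    have : (0 : ℤ) < s * (K - 1) + L :=
      pos_of_mul_pos_left (hd ▸ mul_pos hd0 hK0) (Nat.cast_nonneg s)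
    exact pos_of_mul_pos_left (hcompl ▸ mul_pos this hQ0) hK0.le
  obtain ⟨D, hD⟩ := Nat.exists_eq_add_of_le (show Fintype.card d ≤ Fintype.card n by lia)
  have hDK : (D : ℤ) * K = (s * (K - 1) + L) * Q := by
    rw [← hcompl, hD, Nat.cast_add, add_sub_cancel_left]
  refine ⟨D, Fintype.card n, by lia, ?_, ?_, hlt,
    h.hasEquiangular_complement (Nat.cast_pos.2 hs) (by lia) hD ?_ ?_⟩
  · linear_combination hDK - Q * hQ
  · linear_combination (K - 1 : ℤ) * hn - (Q + s * (K - 1)) * hQ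
  · have hwelch : ((s : ℤ) ^ 2 + (Fintype.card n - 1)) * Fintype.card d =
        Fintype.card n * s ^ 2 := by
      rw [← mul_left_inj' hK0.ne']
      linear_combination ((s : ℤ) ^ 2 + (Fintype.card n - 1)) * hd + s * (L - s) * hn +
        s * (s * (K - 1) + L) * hL
    rw [mul_one]
    exact_mod_cast hwelch
  · have hratio : (Fintype.card d : ℤ) * Q = s * D := by
      rw [← mul_left_inj' hK0.ne']
      linear_combination Q * hd - s * hDK
    exact_mod_cast hratio

theorem hasETFSeed_self {K : ℕ} (hK : 2 ≤ K) : HasETFSeed K 1 K := by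
  refine ⟨1, 1, one_pos, by push_cast; ring, by push_cast; ring, Nat.one_lt_pow two_ne_zero hK,
    1, fun _ => by simp, fun {a b} hab => absurd (Subsingleton.elim a b) hab⟩

end Seed

section Steiner

theorem card_ne_id {V : Type} [Fintype V] (x : V) :
    Nat.card {y // (id y : V) ≠ id x} = Fintype.card V - 1 := by
  classical
  rw [Nat.card_eq_fintype_card, Fintype.card_subtype_compl]
  simp

theorem IsGDD.isEquiangular_steiner {V ι : Type} [Fintype ι] {B : ι → Set V}
    {S : Set ℕ} {R : ℕ} (h : IsGDD S (id : V → V) B)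
    (e : ∀ x, {i // x ∈ B i} ≃ {z : ZMod (R + 1) // z ≠ 0}) :
    IsEquiangular (blockMatrix B e (simplexMatrix (R + 1))) R 1 where
  gram_self := by
    rintro ⟨x, j⟩
    simp [blockMatrix_gram_same, simplexMatrix_gram]
  norm_gram_sq := by
    rintro ⟨x, j⟩ ⟨y, l⟩ hne
    by_cases hxy : x = y
    · subst hxy
      have hjl : j ≠ l := fun hjl => hne (by rw [hjl])
      simp [blockMatrix_gram_same, simplexMatrix_gram, hjl]
    · rw [h.norm_blockMatrix_gram_of_grp_ne (norm_simplexMatrix _) hxy, one_pow]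

theorem HasUniformGDD.hasETFSeed_steiner {K R : ℕ} (hK : 2 ≤ K) (hR : 1 ≤ R)
    (h : HasUniformGDD K 1 (R * (K - 1) + 1)) : HasETFSeed K 1 (R * (K - 1) + K) := by
  obtain ⟨ι, _, B, hB, hcard, ⟨e⟩⟩ :=
    HasGDD.exists_isGDD_equiv (ρ := {z : ZMod (R + 1) // z ≠ 0})
      (h.hasPBD_of_card (V := Fin (R * (K - 1) + 1)) (Nat.card_fin _)) hK
      fun x => by rw [card_ne_id, card_zmod_ne_zero, Fintype.card_fin]; simp
  rw [Fintype.card_fin, card_zmod_ne_zero, Nat.add_sub_cancel] at hcard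
  have hKcast : ((K - 1 : ℕ) : ℤ) = K - 1 := Nat.cast_pred (by lia)
  have hpos : 0 < Fintype.card ι * K := hcard ▸ by positivity
  have : Nonempty ι := Fintype.card_pos_iff.1 (pos_of_mul_pos_left hpos (Nat.zero_le K))
  refine (hB.isEquiangular_steiner e).hasETFSeed hR hK (one_pow 2) ?_ ?_ ?_ ?_
  · push_cast [hKcast]
    ring
  · rw [← hKcast]
    exact_mod_cast hcard
  · simp [ZMod.card, hKcast]
  · rw [Fintype.card_prod, Fintype.card_fin, ZMod.card, sq]
    have := Nat.le_mul_of_pos_right R (show 0 < K - 1 by lia)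
    exact Nat.mul_lt_mul'' (by lia) (by lia)

end Steiner

section Tremain

open Matrix

/-- The weights of the rows of the Fourier matrix in Tremain's construction: their squares
`3 / 2` and `1 / 2` give any two distinct columns of the weighted matrix the inner product `1`. -/
noncomputable def tremainWeight {n : ℕ} (z : ZMod n) : ℝ :=
  if z = 0 then √(3 / 2) else (√2)⁻¹

/-- Tremain's extension of vectors `A` attached to the `n - 1` points of a Steiner system, which are
identified with the nonzero residues modulo `n`: the vectors of each point get a common new
coordinate, and the columns of a weighted Fourier matrix are added on the new coordinates. -/
noncomputable def tremainMatrix {ι J : Type} {n : ℕ} [NeZero n]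
    (A : Matrix ι ({z : ZMod n // z ≠ 0} × J) ℂ) :
    Matrix (ι ⊕ ZMod n) (({z : ZMod n // z ≠ 0} × J) ⊕ ZMod n) ℂ :=
  fromBlocks A 0 (of fun z p => if z = p.1 then (√2 : ℂ) else 0)
    (of fun z j => tremainWeight z * fourierMatrix n z j)

theorem tremainWeight_mul_self {n : ℕ} (z : ZMod n) :
    tremainWeight z * tremainWeight z = 1 / 2 + if z = 0 then 1 else 0 := by
  unfold tremainWeight
  split_ifs
  · rw [Real.mul_self_sqrt (by norm_num)]
    norm_num
  · rw [← mul_inv, Real.mul_self_sqrt (by norm_num)]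
    norm_num

variable {ι J : Type} [Fintype ι] {n : ℕ} [NeZero n]
  {A : Matrix ι ({z : ZMod n // z ≠ 0} × J) ℂ}

theorem tremainMatrix_gram_inl_inl (p q : {z : ZMod n // z ≠ 0} × J) :
    ((tremainMatrix A)ᴴ * tremainMatrix A) (Sum.inl p) (Sum.inl q) =
      (Aᴴ * A) p q + if p.1 = q.1 then 2 else 0 := by
  have hsqrt : (√2 : ℂ) * √2 = 2 := by
    rw [← Complex.ofReal_mul, Real.mul_self_sqrt (by norm_num), Complex.ofReal_ofNat]
  rw [mul_apply, Fintype.sum_sum_type, mul_apply, Fintype.sum_eq_single p.1.1]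
  · simp [tremainMatrix, ← Subtype.ext_iff, hsqrt]
  · intro z hz
    simp [tremainMatrix, hz]

theorem tremainMatrix_gram_inl_inr (p : {z : ZMod n // z ≠ 0} × J) (j : ZMod n) :
    ((tremainMatrix A)ᴴ * tremainMatrix A) (Sum.inl p) (Sum.inr j) = fourierMatrix n p.1 j := by
  rw [mul_apply, Fintype.sum_sum_type, Fintype.sum_eq_single p.1.1]
  · simp [tremainMatrix, tremainWeight, p.1.2]
  · intro z hz
    simp [tremainMatrix, hz]

theorem tremainMatrix_gram_inr_inr (j l : ZMod n) :
    ((tremainMatrix A)ᴴ * tremainMatrix A) (Sum.inr j) (Sum.inr l) =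
      1 / 2 * (if j = l then (n : ℂ) else 0) + 1 := by
  have hterm (z : ZMod n) : star (tremainWeight z * fourierMatrix n z j : ℂ) *
      (tremainWeight z * fourierMatrix n z l) =
        1 / 2 * (star (fourierMatrix n z j) * fourierMatrix n z l) + if z = 0 then 1 else 0 := by
    have hw : (tremainWeight z : ℂ) * tremainWeight z = 1 / 2 + if z = 0 then 1 else 0 := by
      rw [← Complex.ofReal_mul, tremainWeight_mul_self]
      split_ifs <;> push_cast <;> rfl
    rw [star_mul', Complex.star_def, Complex.conj_ofReal, mul_mul_mul_comm, hw, add_mul]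
    congr 1
    split_ifs with hz
    · simp [hz, fourierMatrix_zero_left]
    · rw [zero_mul]
  rw [← fourierMatrix_gram, mul_apply, mul_apply, Fintype.sum_sum_type, Finset.mul_sum]
  simp only [tremainMatrix, conjTranspose_apply, fromBlocks_apply₁₂, fromBlocks_apply₂₂, of_apply,
    Matrix.zero_apply, mul_zero, Finset.sum_const_zero, zero_add, hterm, Finset.sum_add_distrib,
    Finset.sum_ite_eq', Finset.mem_univ, if_true]

theorem IsGDD.isEquiangular_tremain {r : ℕ} {S : Set ℕ}
    {B : ι → Set {z : ZMod (2 * r + 2) // z ≠ 0}}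
    (h : IsGDD S (id : {z : ZMod (2 * r + 2) // z ≠ 0} → _) B)
    (e : ∀ x, {i // x ∈ B i} ≃ {z : ZMod (r + 1) // z ≠ 0}) :
    IsEquiangular (tremainMatrix (blockMatrix B e (simplexMatrix (r + 1)))) (r + 2 : ℕ) 1 where
  gram_self := by
    rintro (⟨x, j⟩ | j)
    · simp [tremainMatrix_gram_inl_inl, blockMatrix_gram_same, simplexMatrix_gram]
    · rw [tremainMatrix_gram_inr_inr, if_pos rfl]
      push_cast
      ring
  norm_gram_sq := by
    rintro (⟨x, j⟩ | j) (⟨y, l⟩ | l) hne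
    · rw [tremainMatrix_gram_inl_inl]
      by_cases hxy : x = y
      · subst hxy
        have hjl : j ≠ l := fun hjl => hne (by rw [hjl])
        norm_num [blockMatrix_gram_same, simplexMatrix_gram, hjl]
      · rw [if_neg hxy, add_zero, h.norm_blockMatrix_gram_of_grp_ne (norm_simplexMatrix _) hxy,
          one_pow]
    · rw [tremainMatrix_gram_inl_inr, norm_fourierMatrix, one_pow]
    · rw [← (isHermitian_conjTranspose_mul_self _).apply, norm_star,
        tremainMatrix_gram_inl_inr, norm_fourierMatrix, one_pow]
    · rw [tremainMatrix_gram_inr_inr, if_neg fun hjl => hne (by rw [hjl])]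
      simp

theorem HasUniformGDD.hasETFSeed_tremain {r : ℕ} (hr : 2 ≤ r)
    (h : HasUniformGDD 3 1 (2 * r + 1)) : HasETFSeed 3 (-1) (2 * r + 1) := by
  have hpoints : Fintype.card {z : ZMod (2 * r + 2) // z ≠ 0} = 2 * r + 1 := by
    rw [card_zmod_ne_zero, Nat.add_succ_sub_one]
  obtain ⟨ι, _, B, hB, hcard, ⟨e⟩⟩ :=
    HasGDD.exists_isGDD_equiv (ρ := {z : ZMod (r + 1) // z ≠ 0})
      (h.hasPBD_of_card (Nat.card_eq_fintype_card.trans hpoints)) (by norm_num)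
      fun x => by rw [card_ne_id, hpoints, card_zmod_ne_zero]; lia
  rw [hpoints, card_zmod_ne_zero, Nat.add_sub_cancel] at hcard
  have hn : Fintype.card ({z : ZMod (2 * r + 2) // z ≠ 0} × ZMod (r + 1) ⊕ ZMod (2 * r + 2)) =
      (2 * r + 3) * (r + 1) := by
    rw [Fintype.card_sum, Fintype.card_prod, hpoints, ZMod.card, ZMod.card]
    ring
  refine (hB.isEquiangular_tremain e).hasETFSeed (by lia) (by norm_num) (by norm_num) ?_ ?_ ?_ ?_
  · push_cast
    ring
  · rw [Fintype.card_sum, ZMod.card]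
    zify at hcard
    push_cast
    linear_combination hcard
  · rw [hn]
    push_cast
    ring
  · rw [hn]
    nlinarith

end Tremain

section GroupVectors

open Matrix Kronecker

/-- The vectors `A`, attached to the points of a group divisible design whose `u` groups are copies
of `P`, extended by new coordinates: every group has its own copy of the coordinates of the
vectors `C`, and `(x, p), (z, j)` gets the vector `C (p, z)` in those of its group `x`. -/
noncomputable def adjoinGroupVectors {ι c U P Z J : Type} [DecidableEq U]
    (A : Matrix ι ((U × P) × (Z × J)) ℂ) (C : Matrix c (P × Z) ℂ) :
    Matrix (ι ⊕ U × c) ((U × P) × (Z × J)) ℂ :=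
  fromRows A (((1 : Matrix U U ℂ) ⊗ₖ C).submatrix id fun b => (b.1.1, b.1.2, b.2.1))

theorem adjoinGroupVectors_gram {ι c U P Z J : Type} [DecidableEq U] [Fintype U] [Fintype ι]
    [Fintype c] (A : Matrix ι ((U × P) × (Z × J)) ℂ) (C : Matrix c (P × Z) ℂ) (x y : U) (p q : P)
    (z w : Z) (j l : J) :
    ((adjoinGroupVectors A C)ᴴ * adjoinGroupVectors A C) ((x, p), (z, j)) ((y, q), (w, l)) =
      (Aᴴ * A) ((x, p), (z, j)) ((y, q), (w, l)) +
        if x = y then (Cᴴ * C) (p, z) (q, w) else 0 := by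
  rw [adjoinGroupVectors, conjTranspose_fromRows_eq_fromCols_conjTranspose, fromCols_mul_fromRows,
    Matrix.add_apply, conjTranspose_submatrix, conjTranspose_kronecker, conjTranspose_one,
    ← submatrix_mul _ _ _ id _ Function.bijective_id, ← mul_kronecker_mul, one_mul]
  simp [one_apply]

theorem IsGDD.isEquiangular_adjoinGroupVectors {ι c P : Type} [Fintype ι] [Fintype c] {u m n : ℕ}
    [NeZero m] [NeZero n] {S : Set ℕ} {B : ι → Set (Fin u × P)} (h : IsGDD S Prod.fst B)
    (e : ∀ x, {i // x ∈ B i} ≃ ZMod m × {z : ZMod n // z ≠ 0}) {C : Matrix c (P × ZMod m) ℂ}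
    (hC : IsEquiangular C (m + 1) 1) :
    IsEquiangular (adjoinGroupVectors (blockMatrix B e (fourierMatrix m ⊗ₖ simplexMatrix n)) C)
      (m * n + 1) 1 where
  gram_self := by
    rintro ⟨⟨x, p⟩, z, j⟩
    rw [adjoinGroupVectors_gram, blockMatrix_gram_same, conjTranspose_kronecker,
      ← mul_kronecker_mul, kroneckerMap_apply, fourierMatrix_gram, simplexMatrix_gram, if_pos rfl,
      if_pos rfl, if_pos rfl, hC.gram_self]
    push_cast
    ring
  norm_gram_sq := by
    rintro ⟨⟨x, p⟩, z, j⟩ ⟨⟨y, q⟩, w, l⟩ hne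
    rw [adjoinGroupVectors_gram]
    by_cases hxy : x = y
    · subst hxy
      by_cases hpq : p = q
      · subst hpq
        rw [blockMatrix_gram_same, conjTranspose_kronecker, ← mul_kronecker_mul,
          kroneckerMap_apply, fourierMatrix_gram, simplexMatrix_gram, if_pos rfl]
        by_cases hzw : z = w
        · subst hzw
          have hjl : j ≠ l := fun hjl => hne (by rw [hjl])
          simp [hjl, hC.gram_self]
        · rw [if_neg hzw, zero_mul, zero_add, hC.norm_gram_sq (by simp [hzw])]
      · have hpoints : (x, p) ≠ (x, q) := fun hxp => hpq (congrArg Prod.snd hxp)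
        rw [h.blockMatrix_gram_of_grp_eq hpoints rfl, zero_add, if_pos rfl,
          hC.norm_gram_sq (by simp [hpq])]
    · rw [if_neg hxy, add_zero, h.norm_blockMatrix_gram_of_grp_ne _ hxy, one_pow]
      simp [norm_fourierMatrix, norm_simplexMatrix]

end GroupVectors

section Quadruple

/-- The six vectors `x` of `𝔽₂ ^ 4` with `x 0 * x 1 + x 2 * x 3 = 1`, as binary numbers; they form a
difference set. -/
def quadricPoint : Fin 6 → ℕ := ![3, 7, 11, 12, 13, 14]

/-- The `16` characters of `𝔽₂ ^ 4`, encoded as the binary numbers `p + 8 * z`, restricted to the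
quadric `quadricPoint`. -/
def quadricSign (a : Fin 6) (p : Fin 8 × ZMod 2) : ℤ :=
  (-1) ^ ∑ i : Fin 4, ((quadricPoint a &&& (p.1 + 8 * p.2.val)).testBit i).toNat

theorem quadricSign_gram_self (p : Fin 8 × ZMod 2) :
    ∑ a, quadricSign a p * quadricSign a p = 6 := by
  revert p
  decide

theorem quadricSign_gram_sq {p q : Fin 8 × ZMod 2} (hpq : p ≠ q) :
    (∑ a, quadricSign a p * quadricSign a q) ^ 2 = 4 := by
  revert p q
  decide +kernel

open Matrix

theorem isEquiangular_quadric :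
    IsEquiangular (of fun a p => ((√2)⁻¹ * quadricSign a p : ℂ)) 3 1 := by
  have hsqrt : (√2 : ℂ)⁻¹ * (√2 : ℂ)⁻¹ = 2⁻¹ := by
    rw [← mul_inv, ← Complex.ofReal_mul, Real.mul_self_sqrt (by norm_num), Complex.ofReal_ofNat]
  have hgram (p q) : ((of fun a p => ((√2)⁻¹ * quadricSign a p : ℂ))ᴴ *
      of fun a p => ((√2)⁻¹ * quadricSign a p : ℂ)) p q =
        2⁻¹ * (∑ a, quadricSign a p * quadricSign a q : ℤ) := by
    push_cast
    rw [Finset.mul_sum, mul_apply]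
    refine Finset.sum_congr rfl fun a _ => ?_
    simp [mul_mul_mul_comm _ _ (√2 : ℂ)⁻¹, hsqrt]
  refine ⟨fun p => ?_, fun {p q} hpq => ?_⟩
  · rw [hgram, quadricSign_gram_self]
    norm_num
  · rw [hgram, norm_mul, mul_pow, Complex.norm_intCast, sq_abs, ← Int.cast_pow,
      quadricSign_gram_sq hpq]
    norm_num

theorem card_fst_ne {u : ℕ} {P : Type} (x : Fin u × P) :
    Nat.card {y : Fin u × P // y.1 ≠ x.1} = (u - 1) * Nat.card P := by
  let f : {y : Fin u × P // y.1 ≠ x.1} ≃ {a : Fin u // a ≠ x.1} × P :=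
    { toFun := fun y => (⟨y.1.1, y.2⟩, y.1.2)
      invFun := fun y => ⟨(y.1.1, y.2), y.1.2⟩ }
  rw [Nat.card_congr f, Nat.card_prod, Nat.card_eq_fintype_card, Fintype.card_subtype_compl]
  simp

theorem HasUniformGDD.hasETFSeed_quadruple {t : ℕ} (h : HasUniformGDD 4 8 (3 * t + 1)) :
    HasETFSeed 4 (-1) (24 * t + 5) := by
  obtain ⟨ι, _, B, hB, hcard, ⟨e⟩⟩ :=
    HasGDD.exists_isGDD_equiv (ρ := ZMod 2 × {z : ZMod (4 * t + 1) // z ≠ 0}) h (by norm_num)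
      fun x => by
        rw [card_fst_ne, Nat.card_fin, Fintype.card_prod, card_zmod_ne_zero, ZMod.card]
        lia
  rw [Fintype.card_prod, Fintype.card_prod, card_zmod_ne_zero, ZMod.card, Fintype.card_fin,
    Fintype.card_fin, Nat.add_sub_cancel] at hcard
  have hself : ((2 : ℕ) * (4 * t + 1 : ℕ) + 1 : ℝ) = (8 * t + 3 : ℕ) := by
    push_cast
    ring
  have hΦ := hB.isEquiangular_adjoinGroupVectors e
    (C := of fun a p => ((√2)⁻¹ * quadricSign a p : ℂ))
    (by convert isEquiangular_quadric using 1; norm_num)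
  rw [hself] at hΦ
  have hn : Fintype.card ((Fin (3 * t + 1) × Fin 8) × ZMod 2 × ZMod (4 * t + 1)) =
      (24 * t + 8) * (8 * t + 2) := by
    simp only [Fintype.card_prod, Fintype.card_fin, ZMod.card]
    ring
  refine hΦ.hasETFSeed (by lia) (by norm_num) (by norm_num) ?_ ?_ ?_ ?_
  · push_cast
    ring
  · simp only [Fintype.card_sum, Fintype.card_prod, Fintype.card_fin]
    zify at hcard
    push_cast
    linear_combination hcard
  · rw [hn]
    push_cast
    ring
  · rw [hn]
    nlinarith

end Quadruple

/-! ### Character sums over the trace hyperplane -/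

section TraceSum

open Matrix

theorem norm_gaussSum_sq {F : Type*} [Field F] [Fintype F] {χ : MulChar F ℂ} (hχ : χ ≠ 1)
    {ψ : AddChar F ℂ} (hψ : ψ.IsPrimitive) : ‖gaussSum χ ψ‖ ^ 2 = Fintype.card F := by
  have h := gaussSum_mul_gaussSum_eq_card hχ hψ
  rw [← star_gaussSum_eq, Complex.star_def, Complex.mul_conj'] at h
  exact_mod_cast h

/-- The homomorphism restricting the multiplicative characters of a field extension `E` of `k`
to `k`. -/
def restrictChar (k : Type*) {E R : Type*} [Field k] [Field E] [Algebra k E]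
    [CommMonoidWithZero R] : MulChar E R →* MulChar k R where
  toFun χ :=
    { toMonoidHom := (χ : E →* R).comp (algebraMap k E : k →* E)
      map_nonunit' := fun a ha => χ.map_nonunit (by simpa using ha) }
  map_one' := by
    ext u
    exact (MulChar.one_apply (u.isUnit.map (algebraMap k E))).trans (MulChar.one_apply_coe u).symm
  map_mul' χ η := by
    ext u
    rfl

variable {k E : Type*} [Field k] [Field E] [Algebra k E]

theorem restrictChar_apply {R : Type*} [CommMonoidWithZero R] (χ : MulChar E R) (x : k) :
    restrictChar k χ x = χ (algebraMap k E x) := rfl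

theorem restrictChar_surjective [Finite E] :
    Function.Surjective (restrictChar k : MulChar E ℂ →* MulChar k ℂ) := by
  intro χ
  let ι : kˣ →* Eˣ := Units.map (algebraMap k E : k →* E)
  have hι : Function.Injective ι := Units.map_injective (algebraMap k E).injective
  obtain ⟨ψ, hψ⟩ := MonoidHom.domRestrict_surjective ℂ ι.range
    (χ.toUnitHom.comp (MonoidHom.ofInjective hι).symm.toMonoidHom)
  refine ⟨MulChar.ofUnitHom ψ, MulChar.ext fun u => ?_⟩
  have hu := DFunLike.congr_fun hψ (MonoidHom.ofInjective hι u)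
  exact (MulChar.ofUnitHom_coe ψ (ι u)).trans ((congrArg Units.val hu).trans (by simp))

theorem card_mulChar_complex (F : Type*) [Field F] [Finite F] :
    Nat.card (MulChar F ℂ) = Nat.card F - 1 := by
  rw [MulChar.card_eq_card_units_of_hasEnoughRootsOfUnity, Nat.card_units]

theorem card_restrictChar_eq [Finite k] [Finite E] (χ : MulChar k ℂ) :
    Nat.card E - 1 = (Nat.card k - 1) * Nat.card {η : MulChar E ℂ // restrictChar k η = χ} := by
  rw [← card_mulChar_complex, ← card_mulChar_complex]
  exact card_eq_card_mul_card_monoidHom_fiber _ restrictChar_surjective χ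

variable (k) in
/-- The sum of `χ` over the elements of `E` of trace `c` in `k`. -/
noncomputable def traceSum [DecidableEq k] [Fintype E] (χ : MulChar E ℂ) (c : k) : ℂ :=
  ∑ x : {x : E // Algebra.trace k E x = c}, χ x

variable [DecidableEq k] [Fintype E]

theorem traceSum_eq_restrictChar_mul (χ : MulChar E ℂ) {c : k} (hc : c ≠ 0) :
    traceSum k χ c = restrictChar k χ c * traceSum k χ 1 := by
  rw [traceSum, traceSum, Finset.mul_sum]
  have hc' : algebraMap k E c ≠ 0 := by simpa using hc
  let e : {x : E // Algebra.trace k E x = 1} ≃ {x : E // Algebra.trace k E x = c} :=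
    (Equiv.mulLeft₀ _ hc').subtypeEquiv fun x => by
      simp [← Algebra.smul_def, hc]
  refine (Fintype.sum_equiv e _ _ fun x => ?_).symm
  simp [e, restrictChar_apply]

/-- The values of the characters `η` on the elements of `E` of trace one. -/
noncomputable def traceOneMatrix (k : Type*) {E n : Type*} [Field k] [Field E] [Algebra k E]
    (η : n → MulChar E ℂ) : Matrix {x : E // Algebra.trace k E x = 1} n ℂ :=
  of fun x a => η a x

theorem traceOneMatrix_gram {n : Type*} (η : n → MulChar E ℂ) (a b : n) :
    ((traceOneMatrix k η)ᴴ * traceOneMatrix k η) a b = traceSum k ((η a)⁻¹ * η b) 1 := by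
  simp [traceOneMatrix, traceSum, mul_apply, MulChar.star_apply']

theorem traceSum_one :
    traceSum k (1 : MulChar E ℂ) 1 = Fintype.card {x : E // Algebra.trace k E x = 1} := by
  have hunit (x : {x : E // Algebra.trace k E x = 1}) : IsUnit x.1 := by
    rw [isUnit_iff_ne_zero]
    rintro hx
    simpa [hx] using x.2
  simp [traceSum, MulChar.one_apply (hunit _)]

variable [Fintype k]

theorem sum_mul_trace (χ : MulChar E ℂ) (f : k → ℂ) :
    ∑ x, χ x * f (Algebra.trace k E x) = ∑ c, traceSum k χ c * f c := by
  rw [← Fintype.sum_fiberwise (Algebra.trace k E)]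
  refine Finset.sum_congr rfl fun c _ => ?_
  rw [traceSum, Finset.sum_mul]
  exact Finset.sum_congr rfl fun x _ => by rw [x.2]

theorem gaussSum_compAddMonoidHom_trace {χ : MulChar E ℂ} (hχ : χ ≠ 1) (ψ : AddChar k ℂ) :
    gaussSum χ (ψ.compAddMonoidHom (Algebra.trace k E).toAddMonoidHom) =
      traceSum k χ 1 * (gaussSum (restrictChar k χ) ψ - ∑ c, restrictChar k χ c) := by
  have hterm (c : k) : traceSum k χ c * (ψ c - 1) =
      traceSum k χ 1 * (restrictChar k χ c * ψ c - restrictChar k χ c) := by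
    rcases eq_or_ne c 0 with rfl | hc
    · simp
    · rw [traceSum_eq_restrictChar_mul χ hc]
      ring
  calc gaussSum χ (ψ.compAddMonoidHom (Algebra.trace k E).toAddMonoidHom)
      = ∑ x, χ x * (ψ (Algebra.trace k E x) - 1) := by
        simp only [mul_sub, mul_one, Finset.sum_sub_distrib, MulChar.sum_eq_zero_of_ne_one hχ,
          sub_zero]
        rfl
    _ = _ := by
        rw [sum_mul_trace χ fun c => ψ c - 1, Finset.sum_congr rfl fun c _ => hterm c,
          ← Finset.mul_sum, Finset.sum_sub_distrib]
        rfl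

theorem norm_traceSum_sq_mul {χ : MulChar E ℂ} (hχ : χ ≠ 1) {ψ : AddChar k ℂ} (hψ : ψ ≠ 1) :
    ‖traceSum k χ 1‖ ^ 2 * ‖gaussSum (restrictChar k χ) ψ - ∑ c, restrictChar k χ c‖ ^ 2 =
      Fintype.card E := by
  have hΨ : ψ.compAddMonoidHom (Algebra.trace k E).toAddMonoidHom ≠ 1 := by
    obtain ⟨c, hc⟩ := AddChar.ne_one_iff.1 hψ
    obtain ⟨x, rfl⟩ := Algebra.trace_surjective k E c
    exact AddChar.ne_one_iff.2 ⟨x, hc⟩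
  rw [← mul_pow, ← norm_mul, ← gaussSum_compAddMonoidHom_trace hχ,
    norm_gaussSum_sq hχ (AddChar.IsPrimitive.of_ne_one hΨ)]

theorem exists_addChar_ne_one (k : Type*) [Field k] [Finite k] : ∃ ψ : AddChar k ℂ, ψ ≠ 1 := by
  obtain ⟨ψ, hψ⟩ := AddChar.exists_apply_ne_zero.2 (one_ne_zero : (1 : k) ≠ 0)
  exact ⟨ψ, AddChar.ne_one_iff.2 ⟨1, hψ⟩⟩

theorem norm_traceSum_sq_of_restrictChar_ne_one {χ : MulChar E ℂ} (h : restrictChar k χ ≠ 1) :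
    ‖traceSum k χ 1‖ ^ 2 = Fintype.card E / Fintype.card k := by
  obtain ⟨ψ, hψ⟩ := exists_addChar_ne_one k
  have hχ : χ ≠ 1 := by
    rintro rfl
    exact h (map_one _)
  rw [eq_div_iff (by simp), ← norm_traceSum_sq_mul hχ hψ, MulChar.sum_eq_zero_of_ne_one h,
    sub_zero, norm_gaussSum_sq h (AddChar.IsPrimitive.of_ne_one hψ)]

theorem norm_traceSum_sq_of_restrictChar_eq_one {χ : MulChar E ℂ} (hχ : χ ≠ 1)
    (h : restrictChar k χ = 1) :
    ‖traceSum k χ 1‖ ^ 2 = Fintype.card E / (Fintype.card k : ℝ) ^ 2 := by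
  obtain ⟨ψ, hψ⟩ := exists_addChar_ne_one k
  have hsum : -1 - ∑ c, (1 : MulChar k ℂ) c = -(Fintype.card k : ℂ) := by
    rw [MulChar.sum_one_eq_card_units, Fintype.card_units, Nat.cast_sub Fintype.card_pos,
      Nat.cast_one]
    ring
  rw [eq_div_iff (by simp), ← norm_traceSum_sq_mul hχ hψ, h, gaussSum_one_left hψ, hsum, norm_neg,
    Complex.norm_natCast]

theorem card_trace_eq {J : ℕ} (hE : Fintype.card E = Fintype.card k ^ (J + 1)) (c : k) :
    Fintype.card {x : E // Algebra.trace k E x = c} = Fintype.card k ^ J := by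
  have h := card_eq_card_mul_card_addMonoidHom_fiber (Algebra.trace k E).toAddMonoidHom
    (Algebra.trace_surjective k E) c
  simp only [Nat.card_eq_fintype_card, hE, pow_succ'] at h
  exact (Nat.eq_of_mul_eq_mul_left Fintype.card_pos h).symm

end TraceSum

section KhatriRao

open Matrix
open scoped Kronecker

variable {d m c n : Type*} [Fintype d] [Fintype c]

theorem IsEquiangular.khatriRao {Φ : Matrix d m ℂ} {C : Matrix c n ℂ} {π : n → m} {s t v : ℝ}
    (hΦ : IsEquiangular Φ 1 t) (hself : ∀ a, (Cᴴ * C) a a = s)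
    (hsame : ∀ {a b}, a ≠ b → π a = π b → ‖(Cᴴ * C) a b‖ ^ 2 = t * v)
    (hdiff : ∀ {a b}, π a ≠ π b → ‖(Cᴴ * C) a b‖ ^ 2 = v) :
    IsEquiangular ((Φ ⊗ₖ C).submatrix id fun a => (π a, a)) s (t * v) := by
  have hgram (a b : n) : (((Φ ⊗ₖ C).submatrix id fun a => (π a, a))ᴴ *
      (Φ ⊗ₖ C).submatrix id fun a => (π a, a)) a b =
        (Φᴴ * Φ) (π a) (π b) * (Cᴴ * C) a b := by
    rw [conjTranspose_submatrix, ← submatrix_mul _ _ _ _ _ Function.bijective_id,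
      conjTranspose_kronecker, ← mul_kronecker_mul]
    rfl
  refine ⟨fun a => ?_, fun {a b} hab => ?_⟩
  · rw [hgram, hΦ.gram_self, hself, Complex.ofReal_one, one_mul]
  · rw [hgram, norm_mul, mul_pow]
    by_cases hπ : π a = π b
    · rw [hπ, hΦ.gram_self, hsame hab hπ]
      simp
    · rw [hΦ.norm_gram_sq hπ, hdiff hπ]

theorem IsEquiangular.hasEquiangular_normalize [Fintype n] {Φ : Matrix d n ℂ} {s t : ℝ}
    (h : IsEquiangular Φ s t) (hs : 0 < s) :
    HasEquiangular (Fintype.card d) (Fintype.card n) (t / s ^ 2) := by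
  have hsqrt : (((√s)⁻¹ : ℝ) : ℂ) * ((√s)⁻¹ : ℝ) = (s⁻¹ : ℝ) := by
    rw [← Complex.ofReal_mul, ← mul_inv, Real.mul_self_sqrt hs.le]
  have hgram : ((((√s)⁻¹ : ℝ) : ℂ) • Φ)ᴴ * ((((√s)⁻¹ : ℝ) : ℂ) • Φ) =
      ((s⁻¹ : ℝ) : ℂ) • (Φᴴ * Φ) := by
    rw [conjTranspose_smul, smul_mul, Matrix.mul_smul, smul_smul, Complex.star_def,
      Complex.conj_ofReal, hsqrt]
  refine IsEquiangular.hasEquiangular (Φ := (((√s)⁻¹ : ℝ) : ℂ) • Φ)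
    ⟨fun a => ?_, fun {a b} hab => ?_⟩
  · rw [hgram, Matrix.smul_apply, h.gram_self, smul_eq_mul, ← Complex.ofReal_mul,
      inv_mul_cancel₀ hs.ne']
  · rw [hgram, Matrix.smul_apply, norm_smul, mul_pow, h.norm_gram_sq hab, Complex.norm_real,
      Real.norm_eq_abs, sq_abs, inv_pow, inv_mul_eq_div]

variable {k E : Type*} [Field k] [Fintype k] [Field E] [Fintype E] [Algebra k E]

theorem IsEquiangular.khatriRao_traceOneMatrix [DecidableEq k] {Φ : Matrix d m ℂ} {π : n → m}
    {η : n → MulChar E ℂ} (hΦ : IsEquiangular Φ 1 (1 / Fintype.card k)) (hη : η.Injective)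
    (hπ : ∀ a b, restrictChar k (η a) = restrictChar k (η b) ↔ π a = π b) :
    IsEquiangular ((Φ ⊗ₖ traceOneMatrix k η).submatrix id fun a => (π a, a))
      (Fintype.card {x : E // Algebra.trace k E x = 1})
      (1 / Fintype.card k * (Fintype.card E / Fintype.card k)) := by
  have hrestrict (a b : n) : restrictChar k ((η a)⁻¹ * η b) = 1 ↔ π a = π b := by
    rw [map_mul, map_inv, inv_mul_eq_one, hπ]
  refine hΦ.khatriRao (fun a => ?_) (fun {a b} hab hsame => ?_) fun {a b} hdiff => ?_
  · rw [traceOneMatrix_gram, inv_mul_cancel, traceSum_one, Complex.ofReal_natCast]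
  · rw [traceOneMatrix_gram, norm_traceSum_sq_of_restrictChar_eq_one
      (inv_mul_eq_one.not.2 (hη.ne hab)) ((hrestrict a b).2 hsame)]
    ring
  · rw [traceOneMatrix_gram,
      norm_traceSum_sq_of_restrictChar_ne_one ((hrestrict a b).not.2 hdiff)]

-- Every vector is paired with all extensions to `E` of one multiplicative character of `k`.
theorem IsEquiangular.hasEquiangular_extension [Fintype m] {Φ : Matrix d m ℂ} {J T : ℕ}
    (hΦ : IsEquiangular Φ 1 (1 / Fintype.card k)) (f : m ↪ MulChar k ℂ)
    (hE : Fintype.card E = Fintype.card k ^ (J + 1))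
    (hT : (Fintype.card k - 1) * T = Fintype.card k ^ (J + 1) - 1) :
    HasEquiangular (Fintype.card d * Fintype.card k ^ J) (Fintype.card m * T)
      (1 / (Fintype.card k : ℝ) ^ (J + 1)) := by
  classical
  have := Fintype.ofFinite (MulChar E ℂ)
  let n := Σ i : m, {χ : MulChar E ℂ // restrictChar k χ = f i}
  have hn : Fintype.card n = Fintype.card m * T := by
    have hfiber (i : m) : Fintype.card {χ : MulChar E ℂ // restrictChar k χ = f i} = T := by
      have h := card_restrictChar_eq (E := E) (f i)
      simp only [Nat.card_eq_fintype_card, hE, ← hT] at h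
      exact (Nat.eq_of_mul_eq_mul_left (Nat.sub_pos_of_lt Fintype.one_lt_card) h).symm
    rw [Fintype.card_sigma, Finset.sum_congr rfl fun i _ => hfiber i]
    simp
  have hπ (a b : n) : restrictChar k a.2.1 = restrictChar k b.2.1 ↔ a.1 = b.1 := by
    rw [a.2.2, b.2.2, f.injective.eq_iff]
  have hη : Function.Injective fun a : n => a.2.1 := by
    rintro ⟨i, χ, hi⟩ ⟨j, _, hj⟩ rfl
    obtain rfl := f.injective (hi.symm.trans hj)
    rfl
  have h := (hΦ.khatriRao_traceOneMatrix hη hπ).hasEquiangular_normalize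
    (by rw [card_trace_eq hE]; positivity)
  rw [Fintype.card_prod, card_trace_eq hE, hE, hn] at h
  convert h using 1
  push_cast
  field_simp
  ring

end KhatriRao

theorem HasEquiangular.extension {D N q J T : ℕ} (h : HasEquiangular D N (1 / q)) (hN : N < q)
    (hq : IsPrimePow q) (hT : (q - 1) * T = q ^ (J + 1) - 1) :
    HasEquiangular (D * q ^ J) (N * T) (1 / (q : ℝ) ^ (J + 1)) := by
  classical
  obtain ⟨p, e, hp, he, rfl⟩ := (isPrimePow_nat_iff _).1 hq
  obtain ⟨Φ, hΦ⟩ := h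
  have : Fact p.Prime := ⟨hp⟩
  let k := GaloisField p e
  let E := FiniteField.Extension k p (J + 1)
  have := Fintype.ofFinite k
  have := Fintype.ofFinite E
  have := Fintype.ofFinite (MulChar k ℂ)
  have hk : Fintype.card k = p ^ e := by
    rw [← Nat.card_eq_fintype_card, GaloisField.card p e he.ne']
  have hE : Fintype.card E = Fintype.card k ^ (J + 1) := by
    rw [← Nat.card_eq_fintype_card, FiniteField.natCard_extension, Nat.card_eq_fintype_card]
  obtain ⟨f⟩ : Nonempty (Fin N ↪ MulChar k ℂ) := by
    refine Function.Embedding.nonempty_of_card_le ?_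
    rw [Fintype.card_fin, ← Nat.card_eq_fintype_card, card_mulChar_complex,
      Nat.card_eq_fintype_card, hk]
    exact Nat.le_sub_one_of_lt hN
  rw [← hk] at hΦ hT ⊢
  simpa only [Fintype.card_fin] using hΦ.hasEquiangular_extension f hE hT

/-! ### The family of equiangular tight frames -/

theorem HasETFSeed.exists_isETF {K Q J : ℕ} {L : ℤ} (h : HasETFSeed K L Q) (hK : 2 ≤ K)
    (hL : L ^ 2 = 1) (hQ : IsPrimePow Q) (hJ : 1 ≤ J) :
    ∃ DJ NJ : ℕ,
      (DJ : ℤ) * K = ((Q : ℤ) - (K - 1) * L) * (Q : ℤ) ^ (2 * J - 1) ∧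
      (NJ : ℤ) * (((K : ℤ) - 1) * ((Q : ℤ) + L)) =
        ((Q : ℤ) - (K - 1) * L) * ((Q : ℤ) ^ (2 * J) - 1) ∧
      ∃ φ : Fin NJ → EuclideanSpace ℂ (Fin DJ), IsETF DJ NJ φ := by
  obtain ⟨D, N, hD, hDK, hNK, hNQ, h⟩ := h
  obtain ⟨j, rfl⟩ := Nat.exists_eq_add_of_le' hJ
  obtain ⟨T, hT⟩ := Nat.sub_one_dvd_pow_sub_one (Q ^ 2) (j + 1)
  have hTcast : ((Q : ℤ) ^ 2 - 1) * T = (Q ^ 2) ^ (j + 1) - 1 := by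
    have hsub (n : ℕ) : ((Q ^ n - 1 : ℕ) : ℤ) = Q ^ n - 1 :=
      Nat.cast_pred (pow_pos hQ.pos n) |>.trans (by push_cast; rfl)
    rw [← hsub, ← pow_mul, ← hsub, pow_mul, ← Nat.cast_mul, hT]
  have hwelch : ((Q : ℤ) ^ 2 + (N - 1)) * D = N * Q ^ 2 := by
    have hK0 : (K : ℤ) * (K - 1) ≠ 0 := mul_ne_zero (by lia) (by lia)
    rw [← mul_left_inj' hK0]
    linear_combination (((Q : ℤ) ^ 2 - 1) * (K - 1) + N * (K - 1)) * hDK +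
      ((Q - (K - 1) * L) * Q - K * (Q : ℤ) ^ 2) * hNK + Q * (K - 1) * (Q - (K - 1) * L) * hL
  have hwelchJ : (((Q : ℤ) ^ 2) ^ (j + 1) + (N * T - 1)) * (D * (Q ^ 2) ^ j) =
      N * T * (Q ^ 2) ^ (j + 1) := by
    linear_combination (T * ((Q : ℤ) ^ 2) ^ j) * hwelch - D * ((Q : ℤ) ^ 2) ^ j * hTcast
  have hEquiangular : HasEquiangular (D * (Q ^ 2) ^ j) (N * T) (1 / ((Q : ℝ) ^ 2) ^ (j + 1)) := by
    exact_mod_cast HasEquiangular.extension (by exact_mod_cast h) hNQ (hQ.pow two_ne_zero) hT.symm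
  have hQ0 : (0 : ℝ) < Q := Nat.cast_pos.2 hQ.pos
  refine ⟨D * (Q ^ 2) ^ j, N * T, ?_, ?_, hEquiangular.exists_isETF
    (Nat.mul_pos hD (pow_pos (pow_pos hQ.pos 2) j)) ?_⟩
  · rw [show 2 * (j + 1) - 1 = 2 * j + 1 by lia, pow_succ (Q : ℤ), pow_mul]
    push_cast
    linear_combination ((Q : ℤ) ^ 2) ^ j * hDK
  · rw [pow_mul]
    push_cast
    linear_combination T * (Q + L) * hNK + (Q - (K - 1) * L) * hTcast -
      T * (Q - (K - 1) * L) * hL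
  · have : (((Q : ℝ) ^ 2) ^ (j + 1) + (N * T - 1)) * (D * (Q ^ 2) ^ j) =
        N * T * (Q ^ 2) ^ (j + 1) := by exact_mod_cast hwelchJ
    push_cast
    field_simp
    linear_combination this

theorem HasUniformGDD.hasETFSeed {K R : ℕ} (hK : 2 ≤ K) (hR : 1 ≤ R)
    (h : HasUniformGDD K (K - 1) R) : HasETFSeed K 1 (R * (K - 1) + K) :=
  hasETFSeed_steiner hK hR (mul_comm (K - 1) R ▸ h.adjoinPoint (by lia))

theorem hasETFSeed_one_of_modEq {K Q : ℕ} (hK : K = 2 ∨ K = 3 ∨ K = 4 ∨ K = 5) (hQ : 2 ≤ Q)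
    (hmod : Q ≡ K [MOD K * (K - 1)] ∨ Q ≡ 2 * K - 1 [MOD K * (K - 1)]) : HasETFSeed K 1 Q := by
  rcases eq_or_ne Q K with rfl | hne
  · exact hasETFSeed_self hQ
  unfold Nat.ModEq at hmod
  rcases hK with rfl | rfl | rfl | rfl
  · obtain ⟨R, rfl⟩ := Nat.exists_eq_add_of_le' hQ
    have := (hasPBD_two (Fin R)).hasUniformGDD_one
    rw [Nat.card_fin] at this
    simpa using this.hasETFSeed le_rfl (by lia)
  · obtain ⟨R, rfl⟩ : ∃ R, Q = R * 2 + 3 := ⟨(Q - 3) / 2, by lia⟩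
    exact (HasUniformGDD.three_two (by lia)).hasETFSeed (by lia) (by lia)
  · obtain ⟨R, rfl⟩ : ∃ R, Q = R * 3 + 4 := ⟨(Q - 4) / 3, by lia⟩
    exact (HasUniformGDD.four_three (by lia)).hasETFSeed (by lia) (by lia)
  · obtain ⟨R, rfl⟩ : ∃ R, Q = R * 4 + 5 := ⟨(Q - 5) / 4, by lia⟩
    exact (HasUniformGDD.five_four (by lia)).hasETFSeed (by lia) (by lia)

theorem hasETFSeed_three_neg_one {Q : ℕ} (hQ : 7 ≤ Q) (hmod : Q ≡ 1 [MOD 6] ∨ Q ≡ 3 [MOD 6]) :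
    HasETFSeed 3 (-1) Q := by
  unfold Nat.ModEq at hmod
  obtain ⟨r, rfl⟩ : ∃ r, Q = 2 * r + 1 := ⟨Q / 2, by lia⟩
  have hgdd : HasUniformGDD 3 2 r := .three_two (by lia)
  exact (hgdd.adjoinPoint (by lia)).hasETFSeed_tremain (by lia)

theorem hasETFSeed_four_neg_one {Q : ℕ} (hmod : Q ≡ 5 [MOD 24]) : HasETFSeed 4 (-1) Q := by
  unfold Nat.ModEq at hmod
  obtain ⟨t, rfl⟩ : ∃ t, Q = 24 * t + 5 := ⟨Q / 24, by lia⟩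
  exact (HasUniformGDD.four_eight t).hasETFSeed_quadruple

theorem stmt16_general (K : ℕ) (L : ℤ) (Q : ℕ) (hpp : IsPrimePow Q)
    (hcases :
      (L = 1 ∧ (K = 2 ∨ K = 3 ∨ K = 4 ∨ K = 5) ∧
        (Q ≡ K [MOD K * (K - 1)] ∨ Q ≡ 2 * K - 1 [MOD K * (K - 1)])) ∨
      (L = 1 ∧ Q = K) ∨
      (L = -1 ∧ K = 3 ∧ 7 ≤ Q ∧ (Q ≡ 1 [MOD 6] ∨ Q ≡ 3 [MOD 6])) ∨
      (L = -1 ∧ K = 4 ∧ Q ≡ 5 [MOD 24])) :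
    ∀ J : ℕ, 1 ≤ J →
      ∃ DJ NJ : ℕ,
        (DJ : ℤ) * K = ((Q : ℤ) - (K - 1) * L) * (Q : ℤ) ^ (2 * J - 1) ∧
        (NJ : ℤ) * (((K : ℤ) - 1) * ((Q : ℤ) + L)) =
          ((Q : ℤ) - (K - 1) * L) * ((Q : ℤ) ^ (2 * J) - 1) ∧
        ∃ φ : Fin NJ → EuclideanSpace ℂ (Fin DJ), IsETF DJ NJ φ := by
  intro J hJ
  have hQ : 2 ≤ Q := hpp.two_le
  rcases hcases with ⟨rfl, hK, hmod⟩ | ⟨rfl, rfl⟩ | ⟨rfl, rfl, hQ7, hmod⟩ | ⟨rfl, rfl, hmod⟩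
  · exact (hasETFSeed_one_of_modEq hK hQ hmod).exists_isETF (by lia) (one_pow 2) hpp hJ
  · exact (hasETFSeed_self hQ).exists_isETF hQ (one_pow 2) hpp hJ
  · exact (hasETFSeed_three_neg_one hQ7 hmod).exists_isETF (by lia) (by norm_num) hpp hJ
  · exact (hasETFSeed_four_neg_one hmod).exists_isETF (by lia) (by norm_num) hpp hJ

/-- let `K ≥ 2`, `L ∈ {1,−1}`, and let `Q` be a prime power satisfying one
of the conditions (i)–(iv). Then for every `J ≥ 1` there exists an
`ETF(D⁽ᴶ⁾, N⁽ᴶ⁾)` in `ℂ^{D⁽ᴶ⁾}`, where `D⁽ᴶ⁾ = (1/K)·[Q−(K−1)L]·Q^{2J−1}` and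
`N⁽ᴶ⁾ = ([Q−(K−1)L]/(K−1))·(Q^{2J}−1)/(Q+L)` (these being the positive integers
determined by the stated cross-multiplied identities). -/
theorem stmt16 (K : ℕ) (hK : 2 ≤ K) (L : ℤ) (hL : L = 1 ∨ L = -1)
    (Q : ℕ) (hpp : IsPrimePow Q)
    (hcases :
      (L = 1 ∧ (K = 2 ∨ K = 3 ∨ K = 4 ∨ K = 5) ∧ K ^ 2 ≤ Q ∧
        (Q ≡ K [MOD K * (K - 1)] ∨ Q ≡ 2 * K - 1 [MOD K * (K - 1)])) ∨
      (L = 1 ∧ Q = K) ∨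
      (L = -1 ∧ K = 3 ∧ 7 ≤ Q ∧ (Q ≡ 1 [MOD 6] ∨ Q ≡ 3 [MOD 6])) ∨
      (L = -1 ∧ K = 4 ∧ Q ≡ 5 [MOD 24])) :
    ∀ J : ℕ, 1 ≤ J →
      ∃ DJ NJ : ℕ,
        (DJ : ℤ) * K = ((Q : ℤ) - (K - 1) * L) * (Q : ℤ) ^ (2 * J - 1) ∧
        (NJ : ℤ) * (((K : ℤ) - 1) * ((Q : ℤ) + L)) =
          ((Q : ℤ) - (K - 1) * L) * ((Q : ℤ) ^ (2 * J) - 1) ∧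
        ∃ φ : Fin NJ → EuclideanSpace ℂ (Fin DJ), IsETF DJ NJ φ := by
  exact stmt16_general K L Q hpp
    (hcases.imp_left fun ⟨hL, hK, _, hmod⟩ => ⟨hL, hK, hmod⟩)
end

section
/- Let Q ≥ 2 be a prime power. Then the maximal number of mutually unbiased complex ETF(Q,Q+1) equals Q−1: there exists an MUETF(Q, Q+1, Q−1) in ℂ^Q, and no MUETF(Q, Q+1, M) exists in ℂ^Q with M > Q−1. -/
open scoped BigOperators

/-- A doubly-indexed family `(ψ m n)` of unit vectors is an `MUETF(D,N,M)`:
`M` mutually unbiased `ETF(D,N)`. -/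
def IsMUETF {μ ν E : Type*} [NormedAddCommGroup E] [InnerProductSpace ℂ E]
    (D N : ℕ) (ψ : μ → ν → E) : Prop :=
  (∀ m n, ‖ψ m n‖ = 1) ∧
  (∀ m n n', n ≠ n' →
    ‖(inner ℂ (ψ m n) (ψ m n') : ℂ)‖ ^ 2 = ((N : ℝ) - D) / (D * ((N : ℝ) - 1))) ∧
  (∀ m m' n n', m ≠ m' → ‖(inner ℂ (ψ m n) (ψ m' n') : ℂ)‖ ^ 2 = 1 / (D : ℝ))

/-!
*Upper bound.* For a unit vector `v` of a `D`-dimensional space the operator `D · v v* - 1` is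
traceless. For the vectors of an `MUETF(D,N,M)` and the bilinear form `(A, B) ↦ tr (A B)`, the
operators of different `ETF(D,N)` are orthogonal, while those of a single one form a regular simplex
and hence span `N - 1` dimensions. Therefore `M (N - 1) ≤ D² - 1`, which is `M ≤ Q - 1` for
`(D, N) = (Q, Q + 1)`.

*Existence.* Let `S` be a relative difference set in a finite abelian group `G` with forbidden
subgroup `H`. Counting quotients, `|∑_{x ∈ S} χ(x)|²` takes only two values on the characters
`χ ≠ 1` of `G`, depending on whether `χ` is trivial on `H`. So the restrictions to `S` of the
characters of `G`, grouped by their restriction to `H`, form an `MUETF(|S|, [G : H], |H|)`. For an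
extension `L / K` of finite fields, the elements of trace `1` are such a set for `Kˣ ≤ Lˣ`: if
`g ∉ K`, the functionals `tr x` and `tr (g x)` are linearly independent, so the number of `x` on
which both are `1` does not depend on `g`. The degree `2` extension of the field with `Q` elements
has the required parameters.
-/

open Finset Module InnerProductSpace

section SimplexBlocks

variable {K V μ κ : Type*} [Field K] [AddCommGroup V] [Module K V] [Finite μ] [Fintype κ]

theorem linearIndependent_of_simplex_blocks [DecidableEq κ] (B : LinearMap.BilinForm K V)
    {t : μ × κ → V} {c N : K} (hc : c ≠ 0) (hN : N ≠ 0) (hκ : (Fintype.card κ : K) ≠ N)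
    (horth : ∀ m m' n n', m ≠ m' → B (t (m, n)) (t (m', n')) = 0)
    (hblock : ∀ m n n', B (t (m, n)) (t (m, n')) = c * ((if n = n' then N else 0) - 1)) :
    LinearIndependent K t := by
  have := Fintype.ofFinite μ
  rw [Fintype.linearIndependent_iff]
  intro a ha
  have hcoeff (m : μ) (k : κ) : N * a (m, k) = ∑ n, a (m, n) := by
    have hpair : B (t (m, k)) (∑ x, a x • t x) = c * (N * a (m, k) - ∑ n, a (m, n)) := by
      simp only [map_sum, map_smul, smul_eq_mul, Fintype.sum_prod_type]
      rw [Fintype.sum_eq_single m fun m' hm =>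
        sum_eq_zero fun n _ => by rw [horth _ _ _ _ hm.symm, mul_zero]]
      simp only [hblock, mul_sub, mul_ite, mul_zero, mul_one, sum_sub_distrib, sum_ite_eq,
        mem_univ, if_true, mul_sum]
      congr 1
      · ring
      · exact sum_congr rfl fun n _ => mul_comm _ _
    rw [ha, map_zero, eq_comm, mul_eq_zero_iff_left hc, sub_eq_zero] at hpair
    exact hpair
  have hsum (m : μ) : ∑ n, a (m, n) = 0 := by
    have h : N * ∑ k, a (m, k) = Fintype.card κ * ∑ n, a (m, n) := by
      rw [mul_sum, sum_congr rfl fun k _ => hcoeff m k, sum_const, card_univ, nsmul_eq_mul]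
    by_contra hne
    exact hκ (mul_right_cancel₀ hne h).symm
  rintro ⟨m, k⟩
  have h := hcoeff m k
  rw [hsum] at h
  exact (mul_eq_zero.mp h).resolve_left hN

end SimplexBlocks

section TracelessRankOne

variable (𝕜 : Type*) {E : Type*} [RCLike 𝕜] [NormedAddCommGroup E] [InnerProductSpace 𝕜 E]

/-- The traceless part `D · v v* - 1` of the rank one operator `v v*` of a unit vector `v` of a
`D`-dimensional space, scaled by `D` to avoid a division. -/
noncomputable def tracelessRankOne (v : E) : Module.End 𝕜 E :=
  (finrank 𝕜 E : 𝕜) • (rankOne 𝕜 v v).toLinearMap - 1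

variable {𝕜} [FiniteDimensional 𝕜 E]

theorem trace_rankOne_mul_rankOne (v w : E) :
    LinearMap.trace 𝕜 E ((rankOne 𝕜 v v).toLinearMap * (rankOne 𝕜 w w).toLinearMap) =
      (‖inner 𝕜 v w‖ : 𝕜) ^ 2 := by
  rw [Module.End.mul_eq_comp, ← ContinuousLinearMap.toLinearMap_comp, rankOne_comp_rankOne,
    ContinuousLinearMap.toLinearMap_smul, map_smul, trace_rankOne, smul_eq_mul,
    ← inner_conj_symm w v, RCLike.mul_conj]

theorem trace_tracelessRankOne {v : E} (hv : ‖v‖ = 1) :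
    LinearMap.trace 𝕜 E (tracelessRankOne 𝕜 v) = 0 := by
  simp [tracelessRankOne, trace_rankOne, inner_self_eq_norm_sq_to_K, hv]

theorem trace_tracelessRankOne_mul {v w : E} (hv : ‖v‖ = 1) (hw : ‖w‖ = 1) :
    LinearMap.trace 𝕜 E (tracelessRankOne 𝕜 v * tracelessRankOne 𝕜 w) =
      (finrank 𝕜 E : 𝕜) ^ 2 * (‖inner 𝕜 v w‖ : 𝕜) ^ 2 - finrank 𝕜 E := by
  simp only [tracelessRankOne, sub_mul, mul_sub, smul_mul_smul_comm, mul_one, one_mul, map_sub,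
    map_smul, trace_rankOne_mul_rankOne, trace_rankOne, inner_self_eq_norm_sq_to_K, hv, hw,
    LinearMap.trace_one, smul_eq_mul, RCLike.ofReal_one, one_pow]
  ring

end TracelessRankOne

namespace IsMUETF

variable {μ ν E F : Type*} [NormedAddCommGroup E] [InnerProductSpace ℂ E]
  [NormedAddCommGroup F] [InnerProductSpace ℂ F] {D N : ℕ} {ψ : μ → ν → E}

theorem comp_injective {μ' ν' : Type*} (h : IsMUETF D N ψ) {e : μ' → μ} {f : ν' → ν}
    (he : e.Injective) (hf : f.Injective) : IsMUETF D N fun m n => ψ (e m) (f n) :=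
  ⟨fun _ _ => h.1 _ _, fun _ _ _ hn => h.2.1 _ _ _ (hf.ne hn),
    fun _ _ _ _ hm => h.2.2 _ _ _ _ (he.ne hm)⟩

theorem map_linearIsometry (h : IsMUETF D N ψ) (f : E →ₗᵢ[ℂ] F) :
    IsMUETF D N fun m n => f (ψ m n) := by
  simpa only [IsMUETF, f.norm_map, f.inner_map_map] using h

variable [FiniteDimensional ℂ E]

theorem trace_tracelessRankOne_mul_of_ne (h : IsMUETF (finrank ℂ E) N ψ) {m m' : μ} (hm : m ≠ m')
    (n n' : ν) :
    LinearMap.trace ℂ E (tracelessRankOne ℂ (ψ m n) * tracelessRankOne ℂ (ψ m' n')) = 0 := by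
  rw [trace_tracelessRankOne_mul (h.1 _ _) (h.1 _ _), RCLike.ofReal_eq_complex_ofReal,
    ← Complex.ofReal_pow, h.2.2 _ _ _ _ hm]
  push_cast
  rw [one_div, sq, mul_self_mul_inv, sub_self]

theorem trace_tracelessRankOne_mul_same [DecidableEq ν] (h : IsMUETF (finrank ℂ E) N ψ)
    (hN : N ≠ 1) (m : μ) (n n' : ν) :
    LinearMap.trace ℂ E (tracelessRankOne ℂ (ψ m n) * tracelessRankOne ℂ (ψ m n')) =
      finrank ℂ E * (finrank ℂ E - 1) / (N - 1) * ((if n = n' then (N : ℂ) else 0) - 1) := by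
  have hN1 : (N : ℂ) - 1 ≠ 0 := sub_ne_zero.mpr (by exact_mod_cast hN)
  rw [trace_tracelessRankOne_mul (h.1 _ _) (h.1 _ _), RCLike.ofReal_eq_complex_ofReal,
    ← Complex.ofReal_pow]
  split_ifs with hn
  · rw [hn, inner_self_eq_norm_sq_to_K, h.1, div_mul_cancel₀ _ hN1]
    norm_num
    ring
  · rw [h.2.1 _ _ _ hn]
    obtain hD | hD := eq_or_ne (finrank ℂ E : ℂ) 0
    · simp [hD]
    · push_cast
      field_simp
      ring

variable [Fintype ν]

theorem linearIndependent_tracelessRankOne [Finite μ] (hD : 2 ≤ finrank ℂ E)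
    (h : IsMUETF (finrank ℂ E) (Fintype.card ν) ψ) (n₀ : ν) :
    LinearIndependent ℂ fun x : μ × {n // n ≠ n₀} => tracelessRankOne ℂ (ψ x.1 x.2) := by
  classical
  obtain hempty | ⟨⟨n₁, hn₁⟩⟩ := isEmpty_or_nonempty {n // n ≠ n₀}
  · exact linearIndependent_empty_type
  have hN : 1 < Fintype.card ν := Fintype.one_lt_card_iff.mpr ⟨n₁, n₀, hn₁⟩
  have hc : (finrank ℂ E : ℂ) * (finrank ℂ E - 1) / (Fintype.card ν - 1) ≠ 0 := by
    refine div_ne_zero (mul_ne_zero ?_ (sub_ne_zero.mpr ?_)) (sub_ne_zero.mpr ?_) <;>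
    · norm_cast
      omega
  refine linearIndependent_of_simplex_blocks
    ((LinearMap.mul ℂ (Module.End ℂ E)).compr₂ (LinearMap.trace ℂ E)) hc
    (N := Fintype.card ν) (by norm_cast; omega) ?_
    (fun m m' n n' hm => h.trace_tracelessRankOne_mul_of_ne hm n n') fun m n n' => ?_
  · exact_mod_cast (Fintype.card_subtype_lt (x := n₀) (by simp)).ne
  · simpa only [Subtype.ext_iff, LinearMap.compr₂_apply, LinearMap.mul_apply'] using
      h.trace_tracelessRankOne_mul_same hN.ne' m n n'

theorem card_mul_card_sub_one_lt [Fintype μ] (hD : 2 ≤ finrank ℂ E)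
    (h : IsMUETF (finrank ℂ E) (Fintype.card ν) ψ) :
    Fintype.card μ * (Fintype.card ν - 1) < finrank ℂ E ^ 2 := by
  classical
  obtain hν | ⟨⟨n₀⟩⟩ := isEmpty_or_nonempty ν
  · simpa using pow_pos (by omega : 0 < finrank ℂ E) 2
  let T (x : μ × {n // n ≠ n₀}) := tracelessRankOne ℂ (ψ x.1 x.2)
  have hT : Submodule.span ℂ (Set.range T) ≤ LinearMap.ker (LinearMap.trace ℂ E) := by
    rw [Submodule.span_le]
    rintro _ ⟨x, rfl⟩
    exact trace_tracelessRankOne (h.1 _ _)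
  have hone : (1 : Module.End ℂ E) ∉ Submodule.span ℂ (Set.range T) := fun hmem => by
    have htrace := hT hmem
    rw [LinearMap.mem_ker, LinearMap.trace_one, Nat.cast_eq_zero] at htrace
    omega
  have hcard :=
    ((h.linearIndependent_tracelessRankOne hD n₀).option hone).fintype_card_le_finrank
  rw [Fintype.card_option, Fintype.card_prod, finrank_linearMap, ← sq] at hcard
  rwa [← Set.card_ne_eq n₀]

end IsMUETF

section Characters

variable {G : Type*} [CommGroup G]

theorem sum_char_eq_zero [Fintype G] {χ : G →* ℂˣ} (hχ : χ ≠ 1) : ∑ g, (χ g : ℂ) = 0 :=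
  sum_hom_units_eq_zero ((Units.coeHom ℂ).comp χ) fun h => hχ <| by
    ext g
    exact DFunLike.congr_fun h g

theorem conj_char_apply [Finite G] (χ : G →* ℂˣ) (g : G) :
    (starRingEnd ℂ) (χ g : ℂ) = (χ⁻¹ g : ℂˣ) := by
  have hnorm : ‖(χ g : ℂ)‖ = 1 :=
    ((Units.coeHom ℂ).isOfFinOrder (χ.isOfFinOrder (isOfFinOrder_of_finite g))).norm_eq_one
  rw [MonoidHom.inv_apply, Units.val_inv_eq_inv_val, Complex.inv_eq_conj hnorm]

/-- The restriction to `S` of the character `χ`, normalized to a unit vector: the vectors of the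
`MUETF` attached to a relative difference set. -/
noncomputable def charVector (S : Finset G) (χ : G →* ℂˣ) : EuclideanSpace ℂ S :=
  WithLp.toLp 2 fun x => χ x / (√(#S : ℝ) : ℂ)

theorem inner_charVector [Finite G] (S : Finset G) (χ η : G →* ℂˣ) :
    inner ℂ (charVector S χ) (charVector S η) = (∑ x ∈ S, ((χ⁻¹ * η) x : ℂ)) / #S := by
  have hsqrt : ((√(#S : ℝ) : ℝ) : ℂ) * (√(#S : ℝ) : ℝ) = #S := by
    rw [← Complex.ofReal_mul, Real.mul_self_sqrt (Nat.cast_nonneg _), Complex.ofReal_natCast]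
  rw [← sum_coe_sort, sum_div, PiLp.inner_apply]
  refine sum_congr rfl fun x _ => ?_
  rw [charVector, charVector, RCLike.inner_apply', map_div₀, conj_char_apply,
    Complex.conj_ofReal, div_mul_div_comm, hsqrt, MonoidHom.mul_apply, Units.val_mul]

theorem norm_sq_inner_charVector [Finite G] (S : Finset G) (χ η : G →* ℂˣ) :
    ‖(inner ℂ (charVector S χ) (charVector S η) : ℂ)‖ ^ 2 =
      ‖∑ x ∈ S, ((χ⁻¹ * η) x : ℂ)‖ ^ 2 / #S ^ 2 := by
  rw [inner_charVector, norm_div, div_pow, Complex.norm_natCast]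

theorem norm_charVector [Finite G] {S : Finset G} (hS : S.Nonempty) (χ : G →* ℂˣ) :
    ‖charVector S χ‖ = 1 := by
  have hinner : (inner ℂ (charVector S χ) (charVector S χ) : ℂ) = 1 := by
    rw [inner_charVector]
    simp [hS.ne_empty]
  rw [inner_self_eq_norm_sq_to_K] at hinner
  exact (pow_eq_one_iff_of_nonneg (norm_nonneg _) two_ne_zero).mp
    (Complex.ofReal_injective (by simpa using hinner))

theorem ofReal_norm_sq_sum_char [Finite G] (S : Finset G) (χ : G →* ℂˣ) :
    ((‖∑ x ∈ S, (χ x : ℂ)‖ ^ 2 : ℝ) : ℂ) = ∑ x ∈ S, ∑ y ∈ S, (χ (y / x) : ℂ) := by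
  rw [Complex.ofReal_pow, ← Complex.conj_mul', map_sum, sum_mul_sum]
  refine sum_congr rfl fun x _ => sum_congr rfl fun y _ => ?_
  rw [conj_char_apply, map_div, div_eq_inv_mul, Units.val_mul, MonoidHom.inv_apply]

end Characters

section RelativeDifferenceSet

variable {G : Type*} [CommGroup G] [DecidableEq G]

/-- `S` is a relative difference set in `G` with forbidden subgroup `H`: an element of `G` outside
`H` is a quotient of two elements of `S` in exactly `l` ways, and `1` is the only element of `H`
that is such a quotient. -/
structure IsRelativeDifferenceSet (H : Subgroup G) (S : Finset G) (l : ℕ) : Prop where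
  eq_one_of_mem : ∀ g ∈ H, ∀ x ∈ S, g * x ∈ S → g = 1
  card_filter_mul_mem : ∀ g ∉ H, #{x ∈ S | g * x ∈ S} = l

theorem sum_sum_div_eq_sum_card_nsmul [Fintype G] {R : Type*} [AddCommMonoid R] (S : Finset G)
    (f : G → R) : ∑ x ∈ S, ∑ y ∈ S, f (y / x) = ∑ g, #{x ∈ S | g * x ∈ S} • f g := by
  have hinner (x : G) : ∑ y ∈ S, f (y / x) = ∑ g, if g * x ∈ S then f g else 0 := by
    rw [← Equiv.sum_comp (Equiv.divRight x)]
    simp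
  simp only [hinner, ← sum_const, sum_filter]
  exact sum_comm

namespace IsRelativeDifferenceSet

variable {H : Subgroup G} {S : Finset G} {l : ℕ}

theorem sum_sum_div_add [Fintype G] [Fintype H] {R : Type*} [AddCommMonoid R]
    (h : IsRelativeDifferenceSet H S l) (f : G → R) :
    ∑ x ∈ S, ∑ y ∈ S, f (y / x) + l • ∑ g : H, f g = #S • f 1 + l • ∑ g, f g := by
  classical
  have hcount (g : G) : #{x ∈ S | g * x ∈ S} • f g + l • (if g ∈ H then f g else 0) =
      (if g = 1 then #S • f g else 0) + l • f g := by
    by_cases hg1 : g = 1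
    · simp [hg1, H.one_mem]
    by_cases hgH : g ∈ H
    · have hempty : #{x ∈ S | g * x ∈ S} = 0 := by
        rw [card_eq_zero, filter_eq_empty_iff]
        exact fun x hx hgx => hg1 (h.eq_one_of_mem g hgH x hx hgx)
      simp [hg1, hgH, hempty]
    · simp [hg1, hgH, h.card_filter_mul_mem g hgH]
  have hH : ∑ g : H, f g = ∑ g, if g ∈ H then f g else 0 := by
    rw [← sum_filter]
    exact (sum_subtype _ (by simp) f).symm
  rw [sum_sum_div_eq_sum_card_nsmul, hH, smul_sum, ← sum_add_distrib, sum_congr rfl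
    fun g _ => hcount g, sum_add_distrib, sum_ite_eq', if_pos (mem_univ _), smul_sum]

variable [Finite G]

theorem card_sq_add (h : IsRelativeDifferenceSet H S l) :
    #S ^ 2 + l * Nat.card H = #S + l * Nat.card G := by
  have := Fintype.ofFinite G
  have := Fintype.ofFinite H
  simpa [sq] using h.sum_sum_div_add fun _ => (1 : ℕ)

theorem norm_sq_sum_char_of_domRestrict_eq_one (h : IsRelativeDifferenceSet H S l)
    {χ : G →* ℂˣ} (hχ : χ ≠ 1) (hH : χ.domRestrict H = 1) :
    ‖∑ x ∈ S, (χ x : ℂ)‖ ^ 2 = #S - l * Nat.card H := by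
  have := Fintype.ofFinite G
  have := Fintype.ofFinite H
  have hsumH : ∑ g : H, (χ g : ℂ) = Nat.card H := by
    have hone (g : H) : χ g = 1 := DFunLike.congr_fun hH g
    simp [hone]
  have hsum := h.sum_sum_div_add fun g => (χ g : ℂ)
  rw [← ofReal_norm_sq_sum_char, sum_char_eq_zero hχ, hsumH] at hsum
  apply Complex.ofReal_injective
  rw [eq_sub_of_add_eq hsum]
  simp

theorem norm_sq_sum_char_of_domRestrict_ne_one (h : IsRelativeDifferenceSet H S l)
    {χ : G →* ℂˣ} (hH : χ.domRestrict H ≠ 1) : ‖∑ x ∈ S, (χ x : ℂ)‖ ^ 2 = #S := by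
  have := Fintype.ofFinite G
  have := Fintype.ofFinite H
  have hχ : χ ≠ 1 := by
    rintro rfl
    exact hH rfl
  have hsum := h.sum_sum_div_add fun g => (χ g : ℂ)
  rw [← ofReal_norm_sq_sum_char, sum_char_eq_zero hχ,
    show ∑ g : H, (χ g : ℂ) = 0 from sum_char_eq_zero hH] at hsum
  exact Complex.ofReal_injective (by simpa using hsum)

theorem isMUETF_charVector (h : IsRelativeDifferenceSet H S l) (hS : S.Nonempty) :
    IsMUETF #S H.index fun (m : H →* ℂˣ) (n : (MonoidHom.domRestrictHom H ℂˣ).ker) =>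
      charVector S (Function.surjInv (MonoidHom.domRestrict_surjective ℂ H) m * n) := by
  have hS0 : (#S : ℝ) ≠ 0 := by exact_mod_cast hS.card_ne_zero
  set r := MonoidHom.domRestrictHom H ℂˣ
  set s := Function.surjInv (MonoidHom.domRestrict_surjective ℂ H)
  have hrs (m : H →* ℂˣ) (n : r.ker) : r (s m * n) = m := by
    rw [map_mul, n.2, mul_one]
    exact Function.surjInv_eq _ m
  refine ⟨fun _ _ => norm_charVector hS _, fun m n n' hn => ?_, fun m m' n n' hm => ?_⟩
  · have hne : (s m * n)⁻¹ * (s m * n') ≠ 1 :=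
      inv_mul_eq_one.not.mpr fun heq => hn (Subtype.ext (mul_left_cancel heq))
    have htriv : r ((s m * n)⁻¹ * (s m * n')) = 1 := by
      rw [map_mul, map_inv, hrs, hrs, inv_mul_cancel]
    have hindex : (H.index : ℝ) - 1 ≠ 0 := by
      have hcard_ker := Finite.one_lt_card_iff_nontrivial.mpr ⟨n, n', hn⟩
      rw [CommGroup.card_domRestrictHom_ker] at hcard_ker
      exact sub_ne_zero.mpr (by exact_mod_cast hcard_ker.ne')
    have hcard : (#S : ℝ) ^ 2 + l * Nat.card H = #S + l * (Nat.card H * H.index) := by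
      exact_mod_cast H.card_mul_index ▸ h.card_sq_add
    rw [norm_sq_inner_charVector, h.norm_sq_sum_char_of_domRestrict_eq_one hne htriv]
    field_simp
    linear_combination hcard
  · have hnontriv : r ((s m * n)⁻¹ * (s m' * n')) ≠ 1 := by
      rwa [map_mul, map_inv, hrs, hrs, Ne, inv_mul_eq_one]
    rw [norm_sq_inner_charVector, h.norm_sq_sum_char_of_domRestrict_ne_one hnontriv]
    field_simp

theorem exists_isMUETF (h : IsRelativeDifferenceSet H S l) (hS : S.Nonempty) :
    ∃ ψ : Fin (Nat.card H) → Fin H.index → EuclideanSpace ℂ (Fin #S),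
      IsMUETF #S H.index ψ := by
  have e := Finite.equivFinOfCardEq (CommGroup.card_monoidHom_of_hasEnoughRootsOfUnity H ℂ)
  have f := Finite.equivFinOfCardEq (CommGroup.card_domRestrictHom_ker ℂ H)
  exact ⟨_, ((h.isMUETF_charVector hS).comp_injective e.symm.injective
    f.symm.injective).map_linearIsometry
      (LinearIsometryEquiv.piLpCongrLeft 2 ℂ ℂ S.equivFin).toLinearIsometry⟩

end IsRelativeDifferenceSet

end RelativeDifferenceSet

section TraceOne

theorem card_filter_linearMap_eq {K V W : Type*} [Field K] [AddCommGroup V] [Module K V]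
    [AddCommGroup W] [Module K W] [Fintype K] [Fintype V] [DecidableEq W]
    {f : V →ₗ[K] W} (hf : Function.Surjective f) (w : W) :
    #{v | f v = w} = Fintype.card K ^ (finrank K V - finrank K W) := by
  have hker : finrank K V - finrank K W = finrank K (LinearMap.ker f) := by
    rw [← f.finrank_range_add_finrank_ker, LinearMap.range_eq_top.mpr hf, finrank_top,
      Nat.add_sub_cancel_left]
  have := Fintype.ofFinite (LinearMap.ker f)
  rw [hker, ← Module.card_eq_pow_finrank, AddMonoidHom.card_fiber_eq_of_mem_range f (hf w) (hf 0),
    ← Fintype.card_subtype]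
  exact Fintype.card_congr (Equiv.refl (LinearMap.ker f))

variable (K L : Type*) [Field K] [Field L] [Algebra K L]

variable {K L} in
theorem prod_trace_trace_mul_surjective [FiniteDimensional K L] [Algebra.IsSeparable K L] {g : L}
    (hg : g ∉ (algebraMap K L).range) : Function.Surjective
      ((Algebra.trace K L).prod (Algebra.trace K L ∘ₗ LinearMap.mulLeft K g)) := by
  rw [← LinearMap.dualMap_injective_iff, injective_iff_map_eq_zero]
  intro φ hφ
  let a := φ (1, 0)
  let b := φ (0, 1)
  have hφab (x y : K) : φ (x, y) = a * x + b * y := by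
    rw [show (x, y) = x • ((1, 0) : K × K) + y • ((0, 1) : K × K) by simp, map_add, map_smul,
      map_smul, smul_eq_mul, smul_eq_mul, mul_comm x, mul_comm y]
  have hab : algebraMap K L a + algebraMap K L b * g = 0 := by
    refine (traceForm_nondegenerate K L).1 _ fun x => ?_
    have hx := DFunLike.congr_fun hφ x
    simp only [LinearMap.dualMap_apply, LinearMap.prod_apply, Function.prod_apply,
      LinearMap.comp_apply, LinearMap.mulLeft_apply, hφab, LinearMap.zero_apply] at hx
    rw [Algebra.traceForm_apply, add_mul, mul_assoc, ← Algebra.smul_def, ← Algebra.smul_def,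
      map_add, map_smul, map_smul, smul_eq_mul, smul_eq_mul, hx]
  have hb : b = 0 := by
    by_contra hb
    refine hg ⟨-a / b, ?_⟩
    rw [map_div₀, map_neg, div_eq_iff ((map_ne_zero _).mpr hb)]
    linear_combination -hab
  have ha : a = 0 := by simpa [hb] using hab
  ext
  · exact ha
  · exact hb

/-- The image of `Kˣ` in `Lˣ`, the forbidden subgroup for the units of trace `1`. -/
def baseUnits : Subgroup Lˣ :=
  (Units.map (algebraMap K L : K →* L)).range

theorem card_baseUnits : Nat.card (baseUnits K L) = Nat.card K - 1 := by
  rw [← Nat.card_units]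
  exact (Nat.card_congr (MonoidHom.ofInjective
    (Units.map_injective (algebraMap K L).injective)).toEquiv).symm

variable {K L} in
theorem val_mem_range_algebraMap_iff {g : Lˣ} :
    (g : L) ∈ (algebraMap K L).range ↔ g ∈ baseUnits K L := by
  constructor
  · rintro ⟨a, ha⟩
    have ha0 : a ≠ 0 := by
      rintro rfl
      exact g.ne_zero (by rw [← ha, map_zero])
    exact ⟨Units.mk0 a ha0, Units.ext ha⟩
  · rintro ⟨a, rfl⟩
    exact ⟨a, rfl⟩

variable [Fintype L] [DecidableEq L] [DecidableEq K]

variable {L} in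
theorem card_filter_units {p : L → Prop} [DecidablePred p] (hp : ¬ p 0) :
    #{u : Lˣ | p u} = #{x | p x} :=
  card_bij (fun u _ => u) (by simp) (fun _ _ _ _ h => Units.ext h) fun x hx => by
    have hpx : p x := (mem_filter.mp hx).2
    exact ⟨Units.mk0 x (ne_of_apply_ne p fun h => hp (h ▸ hpx)), by simpa using hpx, rfl⟩

/-- The units of `L` of trace `1` over `K`. For finite fields this set is a lift to `Lˣ` of a
subset of `Lˣ / Kˣ`, the complement of a Singer difference set. -/
noncomputable def traceOneUnits : Finset Lˣ :=
  {u | Algebra.trace K L u = 1}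

variable [Fintype K]

theorem card_traceOneUnits : #(traceOneUnits K L) = Fintype.card K ^ (finrank K L - 1) := by
  rw [traceOneUnits, card_filter_units (p := fun x => Algebra.trace K L x = 1) (by simp),
    card_filter_linearMap_eq (Algebra.trace_surjective K L), finrank_self]

theorem isRelativeDifferenceSet_traceOneUnits :
    IsRelativeDifferenceSet (baseUnits K L) (traceOneUnits K L)
      (Fintype.card K ^ (finrank K L - 2)) where
  eq_one_of_mem := by
    rintro _ ⟨a, rfl⟩ x hx hax
    simp only [traceOneUnits, mem_filter, mem_univ, true_and] at hx hax
    have ha : (a : K) = 1 := by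
      simpa [← Algebra.smul_def, hx] using hax
    rw [Units.ext (v := 1) ha, map_one]
  card_filter_mul_mem g hg := by
    have hfilter : {x ∈ traceOneUnits K L | g * x ∈ traceOneUnits K L} =
        ({x | (Algebra.trace K L).prod (Algebra.trace K L ∘ₗ LinearMap.mulLeft K (g : L)) (x : L) =
          (1, 1)} : Finset Lˣ) := by
      ext x
      simp [traceOneUnits]
    rw [hfilter, card_filter_units (p := fun x => (Algebra.trace K L).prod
        (Algebra.trace K L ∘ₗ LinearMap.mulLeft K (g : L)) x = (1, 1)) (by simp),
      card_filter_linearMap_eq (prod_trace_trace_mul_surjective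
        (val_mem_range_algebraMap_iff.not.mpr hg)), finrank_prod, finrank_self]

end TraceOne

theorem exists_isMUETF_of_isPrimePow {Q d D N : ℕ} (hQ : IsPrimePow Q) (hd : d ≠ 0)
    (hD : D = Q ^ (d - 1)) (hN : N * (Q - 1) = Q ^ d - 1) :
    ∃ ψ : Fin (Q - 1) → Fin N → EuclideanSpace ℂ (Fin D), IsMUETF D N ψ := by
  classical
  obtain ⟨p, k, hp, hk, rfl⟩ := hQ
  have : Fact p.Prime := ⟨hp.nat_prime⟩
  have : NeZero d := ⟨hd⟩
  let K := GaloisField p k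
  let L := FiniteField.Extension K p d
  have := Fintype.ofFinite K
  have := Fintype.ofFinite L
  have hK : Nat.card K = p ^ k := GaloisField.card p k hk.ne'
  have hH : Nat.card (baseUnits K L) = p ^ k - 1 := by rw [card_baseUnits, hK]
  have hS : #(traceOneUnits K L) = D := by
    rw [card_traceOneUnits, FiniteField.finrank_extension, Fintype.card_eq_nat_card, hK, hD]
  have hindex : (baseUnits K L).index = N := by
    have hpos : 0 < p ^ k - 1 := Nat.sub_pos_of_lt (Nat.one_lt_pow hk.ne' hp.nat_prime.one_lt)
    refine Nat.eq_of_mul_eq_mul_right hpos ?_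
    rw [hN, ← hH, Subgroup.index_mul_card, Nat.card_units, FiniteField.natCard_extension, hK]
  have hψ := (isRelativeDifferenceSet_traceOneUnits K L).exists_isMUETF
    (card_pos.mp (by rw [hS, hD]; exact Nat.pos_of_ne_zero (by simp [hp.nat_prime.ne_zero])))
  rwa [hH, hindex, hS] at hψ

/-- for a prime power `Q ≥ 2`, the maximal number of mutually unbiased
complex `ETF(Q,Q+1)` equals `Q−1`: an `MUETF(Q, Q+1, Q−1)` exists in `ℂ^Q`, and no
`MUETF(Q, Q+1, M)` exists in `ℂ^Q` with `M > Q−1`. -/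
theorem stmt17 (Q : ℕ) (hQ : 2 ≤ Q) (hpp : IsPrimePow Q) :
    (∃ ψ : Fin (Q - 1) → Fin (Q + 1) → EuclideanSpace ℂ (Fin Q),
      IsMUETF Q (Q + 1) ψ) ∧
    ∀ M : ℕ, Q - 1 < M →
      ¬ ∃ ψ : Fin M → Fin (Q + 1) → EuclideanSpace ℂ (Fin Q),
        IsMUETF Q (Q + 1) ψ := by
  refine ⟨exists_isMUETF_of_isPrimePow hpp two_ne_zero (by simp) ?_, fun M hM ⟨ψ, hψ⟩ => ?_⟩
  · rw [← Nat.sq_sub_sq, one_pow]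
  · have hfinrank : finrank ℂ (EuclideanSpace ℂ (Fin Q)) = Q := finrank_euclideanSpace_fin
    have hcard := IsMUETF.card_mul_card_sub_one_lt (ψ := ψ) (by rwa [hfinrank])
      (by rwa [hfinrank, Fintype.card_fin])
    rw [hfinrank, Fintype.card_fin, Fintype.card_fin, Nat.add_sub_cancel, sq] at hcard
    have hMQ : M < Q := Nat.lt_of_mul_lt_mul_right hcard
    omega
end
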